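/- arXiv:2201.09719 — 3 statements merged into one kernel-verified Lean document; each statement's English description precedes it below -/
import Mathlib

section
/- Let Θ be a real symplectic 2n×2n matrix acting ℂ-linearly on ℂ^{2n}, ω a primitive k-th root of unity and 1 ≤ j ≤ k−1. Then the negative Maslov indices in (ℂ^{2n} × ℂ^{2n}, (−σ_ℂ) ⊕ σ_ℂ) satisfy i(Π², Γ(ωʲΘ), Δ) − i(Π², Γ(Θ), Δ) = −i(Γ(Θ), Δ, Γ(ωʲΘ)) + n + d_j, where d_j = −dim_ℂ(ker(Θ − 1) ∩ Π) + dim_ℂ(ker(Θ − ω^{−j}) ∩ Π) − dim_ℂ ker(Θ − ω^{−j}), all kernels being those of the ℂ-linear action of Θ on ℂ^{2n}. -/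
open scoped ComplexOrder

noncomputable section

/-- `ℂ^{2n}`, written with coordinates indexed by `Fin n ⊕ Fin n`
(first block = `q`-coordinates, second block = `p`-coordinates). -/
abbrev CV (n : ℕ) := (Fin n ⊕ Fin n) → ℂ

/-- The sesquilinear extension `σ_ℂ(X,Y) = σ(X̄,Y)` of the standard symplectic form
`σ(x,y) = ⟨Jx,y⟩`, `J = [[0,−I],[I,0]]`, to `ℂ^{2n}` (conjugate-linear in the first
argument). -/
def sigmaC (n : ℕ) : CV n →ₛₗ[starRingEnd ℂ] CV n →ₗ[ℂ] ℂ :=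
  LinearMap.mk₂'ₛₗ (starRingEnd ℂ) (RingHom.id ℂ)
    (fun x y => (∑ i : Fin n, (starRingEnd ℂ) (x (Sum.inl i)) * y (Sum.inr i)) -
      ∑ i : Fin n, (starRingEnd ℂ) (x (Sum.inr i)) * y (Sum.inl i))
    (by intro x x' y; simp [add_mul, Finset.sum_add_distrib]; ring)
    (by
      intro c x y
      simp only [Pi.smul_apply, smul_eq_mul, map_mul]
      rw [mul_sub, Finset.mul_sum, Finset.mul_sum]
      congr 1 <;> exact Finset.sum_congr rfl (by intros; ring))
    (by intro x y y'; simp [mul_add, Finset.sum_add_distrib]; ring)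
    (by
      intro c x y
      simp only [Pi.smul_apply, smul_eq_mul, RingHom.id_apply]
      rw [mul_sub, Finset.mul_sum, Finset.mul_sum]
      congr 1 <;> exact Finset.sum_congr rfl (by intros; ring))

/-- The orthogonal of a subspace with respect to a sesquilinear form. -/
def sesqOrth {W : Type*} [AddCommGroup W] [Module ℂ W]
    (f : W →ₛₗ[starRingEnd ℂ] W →ₗ[ℂ] ℂ) (L : Submodule ℂ W) : Submodule ℂ W where
  carrier := {u | ∀ w ∈ L, f u w = 0}
  add_mem' := by
    intro a b ha hb w hw
    simp [map_add, ha w hw, hb w hw]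
  zero_mem' := by
    intro w hw
    simp
  smul_mem' := by
    intro c u hu w hw
    simp [LinearMap.map_smulₛₗ, hu w hw]

/-- A complex subspace is Lagrangian for a sesquilinear form when it coincides with its
orthogonal. -/
def IsLagrangianC {W : Type*} [AddCommGroup W] [Module ℂ W]
    (f : W →ₛₗ[starRingEnd ℂ] W →ₗ[ℂ] ℂ) (L : Submodule ℂ W) : Prop :=
  L = sesqOrth f L

/-- Negative inertia index of the (Hermitian) Maslov form of a triple of complex
Lagrangian subspaces: the supremum of complex dimensions of subspaces of
`L1 ∩ (L0 + L2)` on which `m(l1) = σ_ℂ(l0,l2)` is negative definite (negativity in the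
complex order: real and `< 0`). -/
def maslovIndexC {W : Type*} [AddCommGroup W] [Module ℂ W]
    (f : W →ₛₗ[starRingEnd ℂ] W →ₗ[ℂ] ℂ) (L0 L1 L2 : Submodule ℂ W) : ℕ :=
  sSup {d : ℕ | ∃ S : Submodule ℂ W, S ≤ L1 ⊓ (L0 ⊔ L2) ∧
    (∀ v ∈ S, v ≠ 0 → ∀ l0 ∈ L0, ∀ l2 ∈ L2, v = l0 + l2 → f l0 l2 < 0) ∧
    Module.finrank ℂ ↥S = d}

/-- The direct sum of two sesquilinear forms on a product space. -/
def sesqProd {W1 W2 : Type*} [AddCommGroup W1] [Module ℂ W1] [AddCommGroup W2] [Module ℂ W2]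
    (f : W1 →ₛₗ[starRingEnd ℂ] W1 →ₗ[ℂ] ℂ) (g : W2 →ₛₗ[starRingEnd ℂ] W2 →ₗ[ℂ] ℂ) :
    (W1 × W2) →ₛₗ[starRingEnd ℂ] (W1 × W2) →ₗ[ℂ] ℂ :=
  LinearMap.mk₂'ₛₗ (starRingEnd ℂ) (RingHom.id ℂ)
    (fun x y => f x.1 y.1 + g x.2 y.2)
    (by intro x x' y; simp [map_add]; ring)
    (by intro c x y; simp [LinearMap.map_smulₛₗ, smul_eq_mul, mul_add])
    (by intro x y y'; simp [map_add]; ring)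
    (by intro c x y; simp [smul_eq_mul, mul_add])

/-- The direct sum of `k` copies of a sesquilinear form. -/
def sesqPi {W : Type*} [AddCommGroup W] [Module ℂ W] (k : ℕ)
    (f : W →ₛₗ[starRingEnd ℂ] W →ₗ[ℂ] ℂ) :
    (Fin k → W) →ₛₗ[starRingEnd ℂ] (Fin k → W) →ₗ[ℂ] ℂ :=
  LinearMap.mk₂'ₛₗ (starRingEnd ℂ) (RingHom.id ℂ)
    (fun x y => ∑ i, f (x i) (y i))
    (by intro x x' y; simp [map_add, Finset.sum_add_distrib])
    (by intro c x y; simp [LinearMap.map_smulₛₗ, Finset.mul_sum])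
    (by intro x y y'; simp [map_add, Finset.sum_add_distrib])
    (by intro c x y; simp [Finset.mul_sum])

/-- The vertical Lagrangian subspace `Π = {(p,0)} ⊂ ℂ^{2n}`. -/
def PiV (n : ℕ) : Submodule ℂ (CV n) where
  carrier := {x | ∀ i, x (Sum.inr i) = 0}
  add_mem' := by intro a b ha hb i; simp [ha i, hb i]
  zero_mem' := by intro i; simp
  smul_mem' := by intro c x hx i; simp [hx i]

/-- The standard symplectic matrix `J = [[0,−I],[I,0]]`. -/
def symplJ (n : ℕ) : Matrix (Fin n ⊕ Fin n) (Fin n ⊕ Fin n) ℝ :=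
  Matrix.fromBlocks 0 (-1) 1 0

/-- The `ℂ`-linear action on `ℂ^{2n}` of a real `2n×2n` matrix. -/
def cAction {n : ℕ} (Θ : Matrix (Fin n ⊕ Fin n) (Fin n ⊕ Fin n) ℝ) : CV n →ₗ[ℂ] CV n :=
  (Θ.map (Complex.ofReal)).mulVecLin


/-- The form `(−σ_ℂ) ⊕ σ_ℂ` on `ℂ^{2n} × ℂ^{2n}`. -/
def sigma2C (n : ℕ) :
    (CV n × CV n) →ₛₗ[starRingEnd ℂ] (CV n × CV n) →ₗ[ℂ] ℂ :=
  sesqProd (-(sigmaC n)) (sigmaC n)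

/-- The form `(−σ_ℂ)^{⊕k} ⊕ σ_ℂ^{⊕k}` on `Σ^k × Σ^k`, `Σ = ℂ^{2n}`. -/
def bigSigmaC (n k : ℕ) :
    ((Fin k → CV n) × (Fin k → CV n)) →ₛₗ[starRingEnd ℂ]
      ((Fin k → CV n) × (Fin k → CV n)) →ₗ[ℂ] ℂ :=
  sesqProd (-(sesqPi k (sigmaC n))) (sesqPi k (sigmaC n))

/-- The Lagrangian subspace `Π² = Π × Π` of `ℂ^{2n} × ℂ^{2n}`. -/
def Pi2Sub (n : ℕ) : Submodule ℂ (CV n × CV n) := (PiV n).prod (PiV n)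

/-- The diagonal Lagrangian subspace `Δ = {(ξ,ξ)}` of `ℂ^{2n} × ℂ^{2n}`. -/
def DiaSub (n : ℕ) : Submodule ℂ (CV n × CV n) :=
  LinearMap.graph (LinearMap.id : CV n →ₗ[ℂ] CV n)

/-- The Lagrangian subspace `Π^{2k} = Π × ⋯ × Π` of `Σ^k × Σ^k`. -/
def Pi2kSub (n k : ℕ) : Submodule ℂ ((Fin k → CV n) × (Fin k → CV n)) :=
  (Submodule.pi Set.univ fun _ : Fin k => PiV n).prod
    (Submodule.pi Set.univ fun _ : Fin k => PiV n)

/-- The graph `Γ = {(ξ1,…,ξk,Θξ1,…,Θξk)}` of the diagonal action of `Θ` on `Σ^k`. -/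
def GamSub (n k : ℕ) (Θ : Matrix (Fin n ⊕ Fin n) (Fin n ⊕ Fin n) ℝ) :
    Submodule ℂ ((Fin k → CV n) × (Fin k → CV n)) :=
  LinearMap.graph (LinearMap.pi fun i : Fin k => (cAction Θ).comp (LinearMap.proj i))

/-- The graph `Δ^↺ = {(ξ1,…,ξk,ξ2,…,ξk,ξ1)}` of the cyclic shift on `Σ^k`. -/
def DcycSub (n k : ℕ) [NeZero k] : Submodule ℂ ((Fin k → CV n) × (Fin k → CV n)) :=
  LinearMap.graph (LinearMap.funLeft ℂ (CV n) (fun i : Fin k => i + 1))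

/-!
For Lagrangian subspaces the Maslov form of `(L0, L1, L2)` is pulled back to the space of pairs
`(l0, l2)` with `l0 + l2 ∈ L1`. Exchanging `L0` and `L2` changes its sign, so counting the kernel
gives `i(L0, L1, L2) + i(L2, L1, L0)` in terms of dimensions of intersections. If `W = B ⊕ C`, an
explicit isometry from the forms of `(D, B, A)` and `(A, C, D)` to those of `(B, A, C)` and
`(C, D, B)` bounds one sum of indices by the other; exchanging `B` and `C` gives the reverse bound,
hence a cocycle identity. Apply it to `A = Π²`, `B = Γ(αΘ)`, `C = Γ(Θ)`, `D = Δ`. The remaining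
index `i(B, A, C)` is computed from the reflection `(u, v) ↦ (-u, v)`: it preserves `Π²` and
changes the sign of the Maslov form, whose positive and negative indices therefore coincide.
-/

open Module

section LinearAlgebra

variable {K V V' : Type*} [DivisionRing K] [AddCommGroup V] [Module K V] [AddCommGroup V']
  [Module K V']

theorem finrank_map_of_disjoint_ker {g : V →ₗ[K] V'} {S : Submodule K V}
    (hS : Disjoint S (LinearMap.ker g)) : finrank K (S.map g) = finrank K S := by
  have hker : LinearMap.ker (g.domRestrict S) = ⊥ := by
    rw [LinearMap.ker_domRestrict]
    exact Submodule.disjoint_iff_comap_eq_bot.mp hS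
  rw [← LinearMap.range_domRestrict, LinearMap.finrank_range_of_inj (LinearMap.ker_eq_bot.mp hker)]

theorem exists_disjoint_ker_map_eq (g : V →ₗ[K] V') {N : Submodule K V'}
    (hN : N ≤ LinearMap.range g) :
    ∃ S : Submodule K V, Disjoint S (LinearMap.ker g) ∧ S.map g = N := by
  obtain ⟨C, hC⟩ := (LinearMap.ker g).exists_isCompl
  refine ⟨C ⊓ N.comap g, hC.disjoint.symm.mono_left inf_le_left,
    le_antisymm (Submodule.map_le_iff_le_comap.mpr inf_le_right) fun w hw => ?_⟩
  obtain ⟨v, rfl⟩ := hN hw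
  obtain ⟨z, hz, u, hu, rfl⟩ := Submodule.mem_sup.mp (hC.sup_eq_top ▸ Submodule.mem_top (x := v))
  have hzu : g (z + u) = g u := by rw [map_add, LinearMap.mem_ker.mp hz, zero_add]
  exact ⟨u, ⟨hu, Submodule.mem_comap.mpr (hzu ▸ hw)⟩, hzu.symm⟩

theorem finrank_submodule_prod [FiniteDimensional K V] [FiniteDimensional K V']
    (S : Submodule K V) (S' : Submodule K V') :
    finrank K (S.prod S') = finrank K S + finrank K S' := by
  have hrange : LinearMap.range (S.subtype.prodMap S'.subtype) = S.prod S' := by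
    rw [LinearMap.range_prodMap, S.range_subtype, S'.range_subtype]
  rw [← hrange, LinearMap.finrank_range_of_inj
    (S.subtype_injective.prodMap S'.subtype_injective), finrank_prod]

end LinearAlgebra

section NegIndex

variable {V V' : Type*} [AddCommGroup V] [Module ℂ V] [AddCommGroup V'] [Module ℂ V']
  {H : V →ₛₗ[starRingEnd ℂ] V →ₗ[ℂ] ℂ} {H' : V' →ₛₗ[starRingEnd ℂ] V' →ₗ[ℂ] ℂ}

theorem finrank_le_finrank_sesqOrth_add [FiniteDimensional ℂ V] (hH : H.IsRefl)
    (L : Submodule ℂ V) : finrank ℂ V ≤ finrank ℂ (sesqOrth H L) + finrank ℂ L := by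
  let b := finBasis ℂ L
  let φ : V →ₗ[ℂ] Fin (finrank ℂ L) → ℂ := LinearMap.pi fun i => H (b i)
  have hker : LinearMap.ker φ ≤ sesqOrth H L := fun v hv w hw => by
    have hLv : H.flip v ∘ₛₗ L.subtype = 0 := b.ext fun i => congrFun hv i
    exact hH w v (LinearMap.congr_fun hLv ⟨w, hw⟩)
  have hrange : finrank ℂ (LinearMap.range φ) ≤ finrank ℂ L := by
    simpa using (LinearMap.range φ).finrank_le
  have hrank := φ.finrank_range_add_finrank_ker
  have hmono := Submodule.finrank_mono hker
  lia

theorem apply_eq_zero_of_nonneg_on (hH : H.IsSymm) {Q : Submodule ℂ V}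
    (hQ : ∀ v ∈ Q, 0 ≤ H v v) {v w : V} (hv : v ∈ Q) (hw : w ∈ Q) (hvv : H v v = 0) :
    H v w = 0 := by
  let core : PreInnerProductSpace.Core ℂ Q :=
    { inner x y := H x y
      conj_inner_symm x y := hH.eq y x
      re_inner_nonneg x := (Complex.le_def.mp (hQ x x.2)).1
      add_left x y z := by simp
      smul_left x y r := by simp }
  have hcs : ‖H v w‖ * ‖H w v‖ ≤ (H v v).re * (H w w).re :=
    InnerProductSpace.Core.inner_mul_inner_self_le (c := core) ⟨v, hv⟩ ⟨w, hw⟩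
  rw [hvv, ← hH.eq v w, Complex.norm_conj, Complex.zero_re, zero_mul] at hcs
  exact norm_eq_zero.mp (mul_self_eq_zero.mp (le_antisymm hcs (mul_self_nonneg _)))

/-- The form `H` is negative definite on the subspace `S`; in the order of `ℂ` the inequality
`H v v < 0` also says that `H v v` is real. -/
def IsNegDefOn (H : V →ₛₗ[starRingEnd ℂ] V →ₗ[ℂ] ℂ) (S : Submodule ℂ V) : Prop :=
  ∀ v ∈ S, v ≠ 0 → H v v < 0

/-- The negative inertia index of a Hermitian form: the largest dimension of a subspace on which
it is negative definite. It is only meaningful on a finite-dimensional space, where the supremum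
is attained. -/
def negIndex (H : V →ₛₗ[starRingEnd ℂ] V →ₗ[ℂ] ℂ) : ℕ :=
  sSup {d : ℕ | ∃ S : Submodule ℂ V, IsNegDefOn H S ∧ finrank ℂ S = d}

namespace IsNegDefOn

variable {S T : Submodule ℂ V}

theorem apply_nonpos (hS : IsNegDefOn H S) {v : V} (hv : v ∈ S) : H v v ≤ 0 := by
  rcases eq_or_ne v 0 with rfl | hv0
  · simp
  · exact (hS v hv hv0).le

theorem finrank_le_negIndex [FiniteDimensional ℂ V] (hS : IsNegDefOn H S) :
    finrank ℂ S ≤ negIndex H :=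
  le_csSup ⟨finrank ℂ V, by rintro _ ⟨S, -, rfl⟩; exact S.finrank_le⟩ ⟨S, hS, rfl⟩

theorem disjoint (hS : IsNegDefOn H S) (hT : ∀ v ∈ T, 0 ≤ H v v) : Disjoint S T :=
  Submodule.disjoint_def.mpr fun v hvS hvT =>
    by_contra fun hv => (hT v hvT).not_gt (hS v hvS hv)

theorem sup (hH : H.IsSymm) (hS : IsNegDefOn H S) (hT : IsNegDefOn H T)
    (horth : T ≤ sesqOrth H S) : IsNegDefOn H (S ⊔ T) := by
  intro v hv hv0
  obtain ⟨s, hs, t, ht, rfl⟩ := Submodule.mem_sup.mp hv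
  have hts : H t s = 0 := horth ht s hs
  have hst : H s t = 0 := hH.isRefl t s hts
  have hsum : H (s + t) (s + t) = H s s + H t t := by
    simp [hts, hst]
  rw [hsum]
  rcases eq_or_ne s 0 with rfl | hs0
  · simpa using hT t ht (by simpa using hv0)
  · exact add_neg_of_neg_of_nonpos (hS s hs hs0) (hT.apply_nonpos ht)

theorem prod {S' : Submodule ℂ V'} (hS : IsNegDefOn H S) (hS' : IsNegDefOn H' S') :
    IsNegDefOn (sesqProd H H') (S.prod S') := by
  rintro ⟨s, s'⟩ ⟨hs, hs'⟩ hne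
  change H s s + H' s' s' < 0
  rcases eq_or_ne s 0 with rfl | hs0
  · simpa using hS' s' hs' (by simpa using hne)
  · exact add_neg_of_neg_of_nonpos (hS s hs hs0) (hS'.apply_nonpos hs')

end IsNegDefOn

theorem isNegDefOn_span_singleton {v : V} (hv : H v v < 0) : IsNegDefOn H (ℂ ∙ v) := by
  intro w hw hw0
  obtain ⟨c, rfl⟩ := Submodule.mem_span_singleton.mp hw
  have hc : c ≠ 0 := fun h => hw0 (by rw [h, zero_smul])
  have hcv : H (c • v) (c • v) = (Complex.normSq c : ℂ) * H v v := by
    simp [Complex.normSq_eq_conj_mul_self, mul_assoc, mul_left_comm]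
  rw [hcv]
  exact mul_neg_of_pos_of_neg (by exact_mod_cast Complex.normSq_pos.mpr hc) hv

section FiniteDimensional

variable [FiniteDimensional ℂ V] [FiniteDimensional ℂ V']

variable (H) in
theorem exists_isNegDefOn_finrank_eq_negIndex :
    ∃ N : Submodule ℂ V, IsNegDefOn H N ∧ finrank ℂ N = negIndex H := by
  have hne : {d | ∃ S : Submodule ℂ V, IsNegDefOn H S ∧ finrank ℂ S = d}.Nonempty :=
    ⟨0, ⊥, fun _ hv hv0 => absurd hv hv0, finrank_bot ℂ V⟩
  exact Nat.sSup_mem hne ⟨finrank ℂ V, by rintro _ ⟨S, -, rfl⟩; exact S.finrank_le⟩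

theorem IsNegDefOn.isCompl_sesqOrth (hH : H.IsSymm) {N : Submodule ℂ V}
    (hN : IsNegDefOn H N) : IsCompl N (sesqOrth H N) := by
  refine (Submodule.isCompl_iff_disjoint _ _ ?_).mpr <| Submodule.disjoint_def.mpr fun v hv hv' =>
    by_contra fun hv0 => (hN v hv hv0).ne (hv' v hv)
  rw [add_comm]
  exact finrank_le_finrank_sesqOrth_add hH.isRefl N

-- Otherwise `N` could be enlarged by a vector of its orthogonal on which `H` is negative.
theorem IsNegDefOn.nonneg_on_sesqOrth (hH : H.IsSymm) {N : Submodule ℂ V}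
    (hN : IsNegDefOn H N) (hNdim : finrank ℂ N = negIndex H) {v : V} (hv : v ∈ sesqOrth H N) :
    0 ≤ H v v := by
  have hreal : (H v v).im = 0 := Complex.conj_eq_iff_im.mp (hH.eq v v)
  by_contra hnonneg
  have hvv : H v v < 0 := by
    simp_all [Complex.le_def, Complex.lt_def]
  have hv0 : v ≠ 0 := by
    rintro rfl
    simp at hvv
  have hspan : ℂ ∙ v ≤ sesqOrth H N := (Submodule.span_singleton_le_iff_mem _ _).mpr hv
  have hdisj : Disjoint N (ℂ ∙ v) := (hN.isCompl_sesqOrth hH).disjoint.mono_right hspan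
  have hle := (hN.sup hH (isNegDefOn_span_singleton hvv) hspan).finrank_le_negIndex
  have hdim := Submodule.finrank_sup_add_finrank_inf_eq N (ℂ ∙ v)
  rw [hdisj.eq_bot, finrank_bot, finrank_span_singleton hv0] at hdim
  lia

theorem exists_isCompl_sesqOrth_nonneg (hH : H.IsSymm) :
    ∃ N : Submodule ℂ V, finrank ℂ N = negIndex H ∧ IsCompl N (sesqOrth H N) ∧
      ∀ v ∈ sesqOrth H N, 0 ≤ H v v := by
  obtain ⟨N, hN, hNdim⟩ := exists_isNegDefOn_finrank_eq_negIndex H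
  exact ⟨N, hNdim, hN.isCompl_sesqOrth hH, fun _ => hN.nonneg_on_sesqOrth hH hNdim⟩

theorem negIndex_add_finrank_le_of_nonneg_on {Q : Submodule ℂ V} (hQ : ∀ v ∈ Q, 0 ≤ H v v) :
    negIndex H + finrank ℂ Q ≤ finrank ℂ V := by
  obtain ⟨N, hN, hNdim⟩ := exists_isNegDefOn_finrank_eq_negIndex H
  exact hNdim ▸ Submodule.finrank_add_finrank_le_of_disjoint (hN.disjoint hQ)

theorem negIndex_add_negIndex_neg_add_finrank_ker_le (hH : H.IsSymm) :
    negIndex H + negIndex (-H) + finrank ℂ (LinearMap.ker H) ≤ finrank ℂ V := by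
  obtain ⟨P, hP, hPdim⟩ := exists_isNegDefOn_finrank_eq_negIndex (-H)
  have hpos : ∀ p ∈ P, 0 ≤ H p p := fun p hp => by simpa using hP.apply_nonpos hp
  have hdisj : Disjoint P (LinearMap.ker H) :=
    hP.disjoint fun v hv => by simp [LinearMap.mem_ker.mp hv]
  have hnonneg : ∀ v ∈ P ⊔ LinearMap.ker H, 0 ≤ H v v := by
    intro v hv
    obtain ⟨p, hp, z, hz, rfl⟩ := Submodule.mem_sup.mp hv
    have hz : H z = 0 := hz
    have hpz : H p z = 0 := hH.isRefl z p (by rw [hz, LinearMap.zero_apply])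
    simpa [hz, hpz] using hpos p hp
  have hle := negIndex_add_finrank_le_of_nonneg_on hnonneg
  have hdim := Submodule.finrank_sup_add_finrank_inf_eq P (LinearMap.ker H)
  rw [hdisj.eq_bot, finrank_bot] at hdim
  lia

theorem le_negIndex_add_negIndex_neg_add_finrank_ker (hH : H.IsSymm) :
    finrank ℂ V ≤ negIndex H + negIndex (-H) + finrank ℂ (LinearMap.ker H) := by
  have hnegH : (-H).IsSymm := ⟨fun x y => by simp [hH.eq x y]⟩
  obtain ⟨N, hNdim, hN, hNnonneg⟩ := exists_isCompl_sesqOrth_nonneg hH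
  obtain ⟨P, hPdim, hP, hPnonneg⟩ := exists_isCompl_sesqOrth_nonneg hnegH
  have hker : sesqOrth H N ⊓ sesqOrth (-H) P ≤ LinearMap.ker H := by
    rintro v ⟨hvN, hvP⟩
    have hvv : H v v = 0 :=
      le_antisymm (by simpa using hPnonneg v hvP) (hNnonneg v hvN)
    ext w
    obtain ⟨x, hx, y, hy, rfl⟩ :=
      Submodule.mem_sup.mp (hN.sup_eq_top ▸ Submodule.mem_top (x := w))
    have hvx : H v x = 0 := hvN x hx
    have hvy : H v y = 0 := apply_eq_zero_of_nonneg_on hH hNnonneg hvN hy hvv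
    rw [map_add, hvx, hvy, add_zero, LinearMap.zero_apply]
  have hkerdim := Submodule.finrank_mono hker
  have hNP := Submodule.finrank_sup_add_finrank_inf_eq (sesqOrth H N) (sesqOrth (-H) P)
  have hsup := (sesqOrth H N ⊔ sesqOrth (-H) P).finrank_le
  have hNadd := Submodule.finrank_add_eq_of_isCompl hN
  have hPadd := Submodule.finrank_add_eq_of_isCompl hP
  lia

theorem negIndex_add_negIndex_neg_add_finrank_ker (hH : H.IsSymm) :
    negIndex H + negIndex (-H) + finrank ℂ (LinearMap.ker H) = finrank ℂ V :=
  (negIndex_add_negIndex_neg_add_finrank_ker_le hH).antisymm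
    (le_negIndex_add_negIndex_neg_add_finrank_ker hH)

theorem negIndex_le_of_isometry (g : V →ₗ[ℂ] V') (hg : ∀ v, H' (g v) (g v) = H v v) :
    negIndex H ≤ negIndex H' := by
  obtain ⟨N, hN, hNdim⟩ := exists_isNegDefOn_finrank_eq_negIndex H
  have hdisj : Disjoint N (LinearMap.ker g) :=
    hN.disjoint fun v hv => by rw [← hg, LinearMap.mem_ker.mp hv, map_zero]
  have hmap : IsNegDefOn H' (N.map g) := by
    rintro _ ⟨v, hv, rfl⟩ hv0
    rw [hg]
    exact hN v hv fun h => hv0 (by rw [h, map_zero])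
  rw [← hNdim, ← finrank_map_of_disjoint_ker hdisj]
  exact hmap.finrank_le_negIndex

theorem negIndex_add_finrank_range_le_of_isometry (g : V →ₗ[ℂ] V')
    (hg : ∀ v, H' (g v) (g v) = H v v) :
    negIndex H' + finrank ℂ (LinearMap.range g) ≤ negIndex H + finrank ℂ V' := by
  obtain ⟨N, hN, hNdim⟩ := exists_isNegDefOn_finrank_eq_negIndex H'
  obtain ⟨S, hdisj, hS⟩ :=
    exists_disjoint_ker_map_eq g (inf_le_right : N ⊓ LinearMap.range g ≤ LinearMap.range g)
  have hSneg : IsNegDefOn H S := by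
    intro v hv hv0
    have hgv : g v ∈ N ⊓ LinearMap.range g := hS ▸ Submodule.mem_map_of_mem hv
    exact hg v ▸ hN (g v) hgv.1 fun h => hv0 (Submodule.disjoint_def.mp hdisj v hv h)
  have hSdim := hSneg.finrank_le_negIndex
  rw [← finrank_map_of_disjoint_ker hdisj, hS] at hSdim
  have hsum := Submodule.finrank_sup_add_finrank_inf_eq N (LinearMap.range g)
  have hsup := (N ⊔ LinearMap.range g).finrank_le
  lia

theorem negIndex_sesqProd (hH : H.IsSymm) (hH' : H'.IsSymm) :
    negIndex (sesqProd H H') = negIndex H + negIndex H' := by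
  apply le_antisymm
  · obtain ⟨N, hNdim, hN, hnonneg⟩ := exists_isCompl_sesqOrth_nonneg hH
    obtain ⟨N', hNdim', hN', hnonneg'⟩ := exists_isCompl_sesqOrth_nonneg hH'
    have hle := negIndex_add_finrank_le_of_nonneg_on (H := sesqProd H H')
      (Q := (sesqOrth H N).prod (sesqOrth H' N'))
      fun v hv => add_nonneg (hnonneg v.1 hv.1) (hnonneg' v.2 hv.2)
    rw [finrank_submodule_prod, finrank_prod] at hle
    have hadd := Submodule.finrank_add_eq_of_isCompl hN
    have hadd' := Submodule.finrank_add_eq_of_isCompl hN'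
    lia
  · obtain ⟨N, hN, hNdim⟩ := exists_isNegDefOn_finrank_eq_negIndex H
    obtain ⟨N', hN', hNdim'⟩ := exists_isNegDefOn_finrank_eq_negIndex H'
    rw [← hNdim, ← hNdim', ← finrank_submodule_prod]
    exact (hN.prod hN').finrank_le_negIndex

end FiniteDimensional

end NegIndex

section SesqOrth

variable {W : Type*} [AddCommGroup W] [Module ℂ W] {f : W →ₛₗ[starRingEnd ℂ] W →ₗ[ℂ] ℂ}

/-- Skew-Hermitian sesquilinear forms, the complex analogue of alternating bilinear forms. Together
with `LinearMap.SeparatingLeft` this describes the complexified symplectic forms. -/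
def IsSkewHermitian (f : W →ₛₗ[starRingEnd ℂ] W →ₗ[ℂ] ℂ) : Prop :=
  ∀ x y, starRingEnd ℂ (f x y) = -f y x

theorem IsSkewHermitian.isRefl (hf : IsSkewHermitian f) : f.IsRefl := fun x y h => by
  rw [← neg_eq_zero, ← hf, h, map_zero]

theorem sesqOrth_sup (f : W →ₛₗ[starRingEnd ℂ] W →ₗ[ℂ] ℂ) (L M : Submodule ℂ W) :
    sesqOrth f (L ⊔ M) = sesqOrth f L ⊓ sesqOrth f M := by
  refine le_antisymm (fun u hu => ⟨fun w hw => hu w (Submodule.mem_sup_left hw),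
    fun w hw => hu w (Submodule.mem_sup_right hw)⟩) ?_
  rintro u ⟨huL, huM⟩ w hw
  obtain ⟨x, hx, y, hy, rfl⟩ := Submodule.mem_sup.mp hw
  rw [map_add, huL x hx, huM y hy, add_zero]

theorem IsLagrangianC.apply_eq_zero {L : Submodule ℂ W} (hL : IsLagrangianC f L) {x y : W}
    (hx : x ∈ L) (hy : y ∈ L) : f x y = 0 := by
  rw [hL] at hx
  exact hx y hy

variable [FiniteDimensional ℂ W]

theorem finrank_sesqOrth_add (hf : f.IsRefl) (hsep : f.SeparatingLeft) (L : Submodule ℂ W) :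
    finrank ℂ (sesqOrth f L) + finrank ℂ L = finrank ℂ W := by
  obtain ⟨M, hM⟩ := L.exists_isCompl
  have hdisj : Disjoint (sesqOrth f L) (sesqOrth f M) := by
    rw [disjoint_iff_inf_le, ← sesqOrth_sup, hM.sup_eq_top]
    exact fun u hu => hsep u fun w => hu w Submodule.mem_top
  have hle := Submodule.finrank_add_finrank_le_of_disjoint hdisj
  have hLM := Submodule.finrank_add_eq_of_isCompl hM
  have hL := finrank_le_finrank_sesqOrth_add hf L
  have hM := finrank_le_finrank_sesqOrth_add hf M
  lia

theorem sesqOrth_sesqOrth (hf : f.IsRefl) (hsep : f.SeparatingLeft) (L : Submodule ℂ W) :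
    sesqOrth f (sesqOrth f L) = L := by
  have hle : L ≤ sesqOrth f (sesqOrth f L) := fun x hx w hw => hf w x (hw x hx)
  have hL := finrank_sesqOrth_add hf hsep L
  have hLL := finrank_sesqOrth_add hf hsep (sesqOrth f L)
  exact (Submodule.eq_of_le_of_finrank_eq hle (by lia)).symm

namespace IsLagrangianC

variable {L L0 L1 L2 : Submodule ℂ W}

theorem two_mul_finrank (hf : f.IsRefl) (hsep : f.SeparatingLeft) (hL : IsLagrangianC f L) :
    2 * finrank ℂ L = finrank ℂ W := by
  have hdim := finrank_sesqOrth_add hf hsep L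
  rw [← hL] at hdim
  lia

theorem finrank_sup_sup_add_finrank_inf_inf (hf : f.IsRefl) (hsep : f.SeparatingLeft)
    (h0 : IsLagrangianC f L0) (h1 : IsLagrangianC f L1) (h2 : IsLagrangianC f L2) :
    finrank ℂ ↥(L0 ⊔ L1 ⊔ L2) + finrank ℂ ↥(L0 ⊓ L1 ⊓ L2) = finrank ℂ W := by
  have hdim := finrank_sesqOrth_add hf hsep (L0 ⊔ L1 ⊔ L2)
  rw [sesqOrth_sup, sesqOrth_sup, ← h0, ← h1, ← h2] at hdim
  lia

theorem sesqOrth_inf_sup (hf : f.IsRefl) (hsep : f.SeparatingLeft)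
    (h0 : IsLagrangianC f L0) (h1 : IsLagrangianC f L1) (h2 : IsLagrangianC f L2) :
    sesqOrth f (L2 ⊓ (L0 ⊔ L1)) = L2 ⊔ L0 ⊓ L1 := by
  have hsup : sesqOrth f (L0 ⊔ L1) = L0 ⊓ L1 := by rw [sesqOrth_sup, ← h0, ← h1]
  have hinf : sesqOrth f (L0 ⊓ L1) = L0 ⊔ L1 := by rw [← hsup, sesqOrth_sesqOrth hf hsep]
  rw [← sesqOrth_sesqOrth hf hsep (L2 ⊔ L0 ⊓ L1), sesqOrth_sup, ← h2, hinf]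

end IsLagrangianC

end SesqOrth

section MaslovForm

variable {W : Type*} [AddCommGroup W] [Module ℂ W] {f : W →ₛₗ[starRingEnd ℂ] W →ₗ[ℂ] ℂ}
  {L0 L1 L2 : Submodule ℂ W}

/-- The pairs `(l0, l2)` of vectors of `L0` and `L2` with `l0 + l2 ∈ L1`. Parametrising
`L1 ⊓ (L0 ⊔ L2)` by them avoids choosing decompositions `l1 = l0 + l2`. -/
def maslovDomain (L0 L1 L2 : Submodule ℂ W) : Submodule ℂ (W × W) :=
  L0.prod L2 ⊓ L1.comap (LinearMap.coprod LinearMap.id LinearMap.id)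

/-- The Maslov form `m(l0 + l2) = f(l0, l2)`, pulled back to the pairs `(l0, l2)`. -/
def maslovForm (f : W →ₛₗ[starRingEnd ℂ] W →ₗ[ℂ] ℂ) (L0 L1 L2 : Submodule ℂ W) :
    maslovDomain L0 L1 L2 →ₛₗ[starRingEnd ℂ] maslovDomain L0 L1 L2 →ₗ[ℂ] ℂ :=
  (f.comp (LinearMap.fst ℂ W W ∘ₗ (maslovDomain L0 L1 L2).subtype)).compl₂
    (LinearMap.snd ℂ W W ∘ₗ (maslovDomain L0 L1 L2).subtype)

/-- The map `(l0, l2) ↦ l0 + l2` onto `L1 ⊓ (L0 ⊔ L2)`. -/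
def maslovSum (L0 L1 L2 : Submodule ℂ W) : maslovDomain L0 L1 L2 →ₗ[ℂ] W :=
  (LinearMap.coprod LinearMap.id LinearMap.id).domRestrict (maslovDomain L0 L1 L2)

theorem maslovForm_apply (x y : maslovDomain L0 L1 L2) :
    maslovForm f L0 L1 L2 x y = f x.1.1 y.1.2 :=
  rfl

theorem maslovSum_apply (x : maslovDomain L0 L1 L2) : maslovSum L0 L1 L2 x = x.1.1 + x.1.2 :=
  rfl

theorem range_maslovSum : LinearMap.range (maslovSum L0 L1 L2) = L1 ⊓ (L0 ⊔ L2) := by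
  ext v
  constructor
  · rintro ⟨⟨p, ⟨hp0, hp2⟩, hp1⟩, rfl⟩
    exact ⟨hp1, Submodule.add_mem_sup hp0 hp2⟩
  · rintro ⟨hv1, hv⟩
    obtain ⟨x, hx, y, hy, rfl⟩ := Submodule.mem_sup.mp hv
    exact ⟨⟨(x, y), ⟨hx, hy⟩, hv1⟩, rfl⟩

theorem map_subtype_ker_maslovSum :
    (LinearMap.ker (maslovSum L0 L1 L2)).map (maslovDomain L0 L1 L2).subtype =
      (L0 ⊓ L2).map (LinearMap.id.prod (-LinearMap.id)) := by
  ext ⟨x, y⟩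
  constructor
  · rintro ⟨⟨_, ⟨hx, hy⟩, _⟩, hsum, rfl⟩
    obtain rfl : y = -x := eq_neg_of_add_eq_zero_right hsum
    exact ⟨x, ⟨hx, neg_mem_iff.mp hy⟩, rfl⟩
  · rintro ⟨z, ⟨hz0, hz2⟩, hz⟩
    have hmem : (z, -z) ∈ maslovDomain L0 L1 L2 :=
      ⟨⟨hz0, L2.neg_mem hz2⟩, by simp⟩
    exact ⟨⟨_, hmem⟩, add_neg_cancel z, hz⟩

theorem finrank_maslovDomain_add_finrank_sup [FiniteDimensional ℂ W] (L0 L1 L2 : Submodule ℂ W) :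
    finrank ℂ (maslovDomain L0 L1 L2) + finrank ℂ ↥(L0 ⊔ L1 ⊔ L2) =
      finrank ℂ L0 + finrank ℂ L1 + finrank ℂ L2 := by
  have hrank := (maslovSum L0 L1 L2).finrank_range_add_finrank_ker
  have hker : finrank ℂ (LinearMap.ker (maslovSum L0 L1 L2)) = finrank ℂ ↥(L0 ⊓ L2) := by
    rw [← Submodule.finrank_map_subtype_eq, map_subtype_ker_maslovSum, finrank_map_of_disjoint_ker]
    simp [LinearMap.ker_prod]
  rw [range_maslovSum, hker] at hrank
  have h02 := Submodule.finrank_sup_add_finrank_inf_eq L0 L2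
  have h102 := Submodule.finrank_sup_add_finrank_inf_eq L1 (L0 ⊔ L2)
  rw [sup_left_comm, ← sup_assoc] at h102
  lia

theorem maslovForm_isSymm (hf : IsSkewHermitian f) (h0 : IsLagrangianC f L0)
    (h1 : IsLagrangianC f L1) (h2 : IsLagrangianC f L2) : (maslovForm f L0 L1 L2).IsSymm := by
  refine ⟨?_⟩
  rintro ⟨⟨x0, x2⟩, ⟨hx0, hx2⟩, hx⟩ ⟨⟨y0, y2⟩, ⟨hy0, hy2⟩, hy⟩
  have hzero : f (y0 + y2) (x0 + x2) = 0 := h1.apply_eq_zero hy hx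
  simp only [map_add, LinearMap.add_apply, h0.apply_eq_zero hy0 hx0,
    h2.apply_eq_zero hy2 hx2, add_zero, zero_add] at hzero
  rw [maslovForm_apply, maslovForm_apply, hf, neg_eq_iff_add_eq_zero, hzero]

theorem apply_eq_apply_of_add_eq_add (h0 : IsLagrangianC f L0) (h2 : IsLagrangianC f L2)
    {x0 y0 x2 y2 : W} (hx0 : x0 ∈ L0) (hy0 : y0 ∈ L0) (hx2 : x2 ∈ L2) (hy2 : y2 ∈ L2)
    (h : x0 + x2 = y0 + y2) : f x0 x2 = f y0 y2 := by
  have hz : x0 - y0 = y2 - x2 := sub_eq_sub_iff_add_eq_add.mpr (by rw [h, add_comm])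
  calc f x0 x2 = f y0 x2 + f (x0 - y0) x2 := by simp
    _ = f y0 x2 := by rw [hz, h2.apply_eq_zero (L2.sub_mem hy2 hx2) hx2, add_zero]
    _ = f y0 y2 - f y0 (y2 - x2) := by simp
    _ = f y0 y2 := by rw [← hz, h0.apply_eq_zero hy0 (L0.sub_mem hx0 hy0), sub_zero]

theorem maslovIndexC_eq_negIndex (h0 : IsLagrangianC f L0) (h2 : IsLagrangianC f L2) :
    maslovIndexC f L0 L1 L2 = negIndex (maslovForm f L0 L1 L2) := by
  refine congrArg sSup (Set.ext fun d => ⟨?_, ?_⟩)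
  · rintro ⟨S, hSle, hS, rfl⟩
    rw [← range_maslovSum] at hSle
    obtain ⟨T, hdisj, rfl⟩ := exists_disjoint_ker_map_eq (maslovSum L0 L1 L2) hSle
    refine ⟨T, fun p hp hp0 => ?_, (finrank_map_of_disjoint_ker hdisj).symm⟩
    have hsum : maslovSum L0 L1 L2 p ≠ 0 := fun h =>
      hp0 (Submodule.disjoint_def.mp hdisj p hp h)
    exact hS _ (Submodule.mem_map_of_mem hp) hsum _ p.2.1.1 _ p.2.1.2 (maslovSum_apply p)
  · rintro ⟨T, hT, rfl⟩
    have hdisj : Disjoint T (LinearMap.ker (maslovSum L0 L1 L2)) := hT.disjoint fun p hp => by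
      have hneg : p.1.1 = -p.1.2 := eq_neg_of_add_eq_zero_left hp
      rw [maslovForm_apply, hneg, map_neg, LinearMap.neg_apply,
        h2.apply_eq_zero p.2.1.2 p.2.1.2, neg_zero]
    refine ⟨T.map (maslovSum L0 L1 L2), ?_, ?_, finrank_map_of_disjoint_ker hdisj⟩
    · exact range_maslovSum.le.trans' LinearMap.map_le_range
    · rintro _ ⟨p, hp, rfl⟩ hne l0 hl0 l2 hl2 heq
      rw [← apply_eq_apply_of_add_eq_add h0 h2 p.2.1.1 hl0 p.2.1.2 hl2 heq]
      exact hT p hp fun h => hne (by rw [h, map_zero])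

theorem mem_ker_maslovForm {p : maslovDomain L0 L1 L2} :
    p ∈ LinearMap.ker (maslovForm f L0 L1 L2) ↔ p.1.1 ∈ sesqOrth f (L2 ⊓ (L0 ⊔ L1)) := by
  constructor
  · rintro hp w ⟨hw2, hw⟩
    obtain ⟨x, hx, y, hy, rfl⟩ := Submodule.mem_sup.mp hw
    have hmem : (-x, x + y) ∈ maslovDomain L0 L1 L2 :=
      ⟨⟨L0.neg_mem hx, hw2⟩, by simpa using hy⟩
    exact LinearMap.congr_fun hp ⟨_, hmem⟩
  · intro hp
    ext ⟨⟨y0, y2⟩, ⟨hy0, hy2⟩, hy⟩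
    refine hp y2 ⟨hy2, ?_⟩
    simpa using Submodule.add_mem_sup (L0.neg_mem hy0) hy

/-- The map `(l0, l2) ↦ (l2, l0)`. -/
def maslovSwap (L0 L1 L2 : Submodule ℂ W) : maslovDomain L0 L1 L2 →ₗ[ℂ] maslovDomain L2 L1 L0 :=
  (LinearEquiv.prodComm ℂ W W).toLinearMap.restrict fun p hp =>
    ⟨hp.1.symm, by simpa [add_comm] using hp.2⟩

theorem maslovForm_maslovSwap (h0 : IsLagrangianC f L0) (h1 : IsLagrangianC f L1)
    (h2 : IsLagrangianC f L2) (p : maslovDomain L0 L1 L2) :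
    maslovForm f L2 L1 L0 (maslovSwap L0 L1 L2 p) (maslovSwap L0 L1 L2 p) =
      -maslovForm f L0 L1 L2 p p := by
  obtain ⟨⟨x, y⟩, ⟨hx, hy⟩, hxy⟩ := p
  have hzero : f (x + y) (x + y) = 0 := h1.apply_eq_zero hxy hxy
  simp only [map_add, LinearMap.add_apply, h0.apply_eq_zero hx hx, h2.apply_eq_zero hy hy,
    add_zero, zero_add] at hzero
  exact eq_neg_of_add_eq_zero_left hzero

variable [FiniteDimensional ℂ W]

theorem map_subtype_ker_maslovForm (hf : f.IsRefl) (hsep : f.SeparatingLeft)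
    (h0 : IsLagrangianC f L0) (h1 : IsLagrangianC f L1) (h2 : IsLagrangianC f L2) :
    (LinearMap.ker (maslovForm f L0 L1 L2)).map (maslovDomain L0 L1 L2).subtype =
      maslovDomain (L0 ⊓ L1 ⊔ L0 ⊓ L2) L1 L2 := by
  have hmod : L0 ⊓ L1 ⊔ L0 ⊓ L2 = sesqOrth f (L2 ⊓ (L0 ⊔ L1)) ⊓ L0 := by
    rw [IsLagrangianC.sesqOrth_inf_sup hf hsep h0 h1 h2, sup_comm L2,
      sup_inf_assoc_of_le L2 inf_le_left, inf_comm L2]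
  rw [hmod]
  ext p
  constructor
  · rintro ⟨q, hq, rfl⟩
    exact ⟨⟨⟨mem_ker_maslovForm.mp hq, q.2.1.1⟩, q.2.1.2⟩, q.2.2⟩
  · rintro ⟨⟨⟨hp, hp0⟩, hp2⟩, hp1⟩
    exact ⟨⟨p, ⟨hp0, hp2⟩, hp1⟩, mem_ker_maslovForm.mpr hp, rfl⟩

theorem finrank_ker_maslovForm_add (hf : f.IsRefl) (hsep : f.SeparatingLeft)
    (h0 : IsLagrangianC f L0) (h1 : IsLagrangianC f L1) (h2 : IsLagrangianC f L2) :
    finrank ℂ (LinearMap.ker (maslovForm f L0 L1 L2)) + finrank ℂ ↥(L0 ⊓ L1 ⊓ L2) =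
      finrank ℂ ↥(L0 ⊓ L1) + finrank ℂ ↥(L0 ⊓ L2) + finrank ℂ ↥(L1 ⊓ L2) := by
  have hker := Submodule.finrank_map_subtype_eq _ (LinearMap.ker (maslovForm f L0 L1 L2))
  rw [map_subtype_ker_maslovForm hf hsep h0 h1 h2] at hker
  have hdom := finrank_maslovDomain_add_finrank_sup (L0 ⊓ L1 ⊔ L0 ⊓ L2) L1 L2
  have hsup : L0 ⊓ L1 ⊔ L0 ⊓ L2 ⊔ L1 ⊔ L2 = L1 ⊔ L2 := by
    rw [sup_assoc, sup_eq_right]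
    exact sup_le_sup inf_le_right inf_le_right
  rw [hsup] at hdom
  have h01_02 := Submodule.finrank_sup_add_finrank_inf_eq (L0 ⊓ L1) (L0 ⊓ L2)
  rw [← inf_inf_distrib_left, ← inf_assoc] at h01_02
  have h12 := Submodule.finrank_sup_add_finrank_inf_eq L1 L2
  lia

theorem finrank_maslovDomain (hf : f.IsRefl) (hsep : f.SeparatingLeft)
    (h0 : IsLagrangianC f L0) (h1 : IsLagrangianC f L1) (h2 : IsLagrangianC f L2) :
    finrank ℂ (maslovDomain L0 L1 L2) = finrank ℂ L0 + finrank ℂ ↥(L0 ⊓ L1 ⊓ L2) := by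
  have hdom := finrank_maslovDomain_add_finrank_sup L0 L1 L2
  have hsup := IsLagrangianC.finrank_sup_sup_add_finrank_inf_inf hf hsep h0 h1 h2
  have hdim0 := h0.two_mul_finrank hf hsep
  have hdim1 := h1.two_mul_finrank hf hsep
  have hdim2 := h2.two_mul_finrank hf hsep
  lia

theorem negIndex_maslovForm_swap (h0 : IsLagrangianC f L0) (h1 : IsLagrangianC f L1)
    (h2 : IsLagrangianC f L2) :
    negIndex (maslovForm f L2 L1 L0) = negIndex (-maslovForm f L0 L1 L2) := by
  apply le_antisymm
  · refine negIndex_le_of_isometry (maslovSwap L2 L1 L0) fun p => ?_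
    exact neg_eq_iff_eq_neg.mpr (maslovForm_maslovSwap h2 h1 h0 p)
  · exact negIndex_le_of_isometry (maslovSwap L0 L1 L2) (maslovForm_maslovSwap h0 h1 h2)

theorem maslovIndexC_add_maslovIndexC_swap (hf : IsSkewHermitian f) (hsep : f.SeparatingLeft)
    (h0 : IsLagrangianC f L0) (h1 : IsLagrangianC f L1) (h2 : IsLagrangianC f L2) :
    maslovIndexC f L0 L1 L2 + maslovIndexC f L2 L1 L0 + finrank ℂ ↥(L0 ⊓ L1) +
        finrank ℂ ↥(L0 ⊓ L2) + finrank ℂ ↥(L1 ⊓ L2) =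
      finrank ℂ L0 + 2 * finrank ℂ ↥(L0 ⊓ L1 ⊓ L2) := by
  rw [maslovIndexC_eq_negIndex h0 h2, maslovIndexC_eq_negIndex h2 h0,
    negIndex_maslovForm_swap h0 h1 h2]
  have hsum := negIndex_add_negIndex_neg_add_finrank_ker (maslovForm_isSymm hf h0 h1 h2)
  have hker := finrank_ker_maslovForm_add hf.isRefl hsep h0 h1 h2
  have hdom := finrank_maslovDomain hf.isRefl hsep h0 h1 h2
  lia

end MaslovForm

section Cocycle

variable {W : Type*} [AddCommGroup W] [Module ℂ W] {f : W →ₛₗ[starRingEnd ℂ] W →ₗ[ℂ] ℂ}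
  {A B C D L0 L1 L2 : Submodule ℂ W}

/-- For complementary `L0` and `L2`, the decomposition `l1 ↦ (l0, l2)` of the vectors of `L1`. -/
def maslovSplit (h : IsCompl L0 L2) (L1 : Submodule ℂ W) : L1 →ₗ[ℂ] maslovDomain L0 L1 L2 :=
  (((L0.projection L2 h).prod (L2.projection L0 h.symm)) ∘ₗ L1.subtype).codRestrict _ fun v =>
    ⟨⟨Submodule.projection_apply_mem h v, Submodule.projection_apply_mem h.symm v⟩, by
      simp [Submodule.projection_add_projection_eq_self]⟩

theorem maslovSplit_add (h : IsCompl L0 L2) (v : L1) :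
    (maslovSplit h L1 v).1.1 + (maslovSplit h L1 v).1.2 = v :=
  Submodule.projection_add_projection_eq_self h v

/-- A pair `((d₁, a₁), (a₂, d₂))` with `d₁ + a₁ ∈ B` and `a₂ + d₂ ∈ C` is sent to the
decompositions of `a₁ + a₂ ∈ A` and of `-(d₁ + d₂) ∈ D` along `W = B ⊕ C`. -/
def cocycleMap (A D : Submodule ℂ W) (h : IsCompl B C) :
    maslovDomain D B A × maslovDomain A C D →ₗ[ℂ] maslovDomain B A C × maslovDomain C D B :=
  LinearMap.prod
    (maslovSplit h A ∘ₗ ((LinearMap.snd ℂ W W ∘ₗ Submodule.subtype _).coprod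
      (LinearMap.fst ℂ W W ∘ₗ Submodule.subtype _)).codRestrict A
        fun p => A.add_mem p.1.2.1.2 p.2.2.1.1)
    (maslovSplit h.symm D ∘ₗ (-(LinearMap.fst ℂ W W ∘ₗ Submodule.subtype _).coprod
      (LinearMap.snd ℂ W W ∘ₗ Submodule.subtype _)).codRestrict D
        fun p => D.neg_mem (D.add_mem p.1.2.1.1 p.2.2.1.2))

theorem cocycleMap_fst_add (h : IsCompl B C) (p : maslovDomain D B A × maslovDomain A C D) :
    (cocycleMap A D h p).1.1.1 + (cocycleMap A D h p).1.1.2 = p.1.1.2 + p.2.1.1 :=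
  maslovSplit_add h _

theorem cocycleMap_snd_add (h : IsCompl B C) (p : maslovDomain D B A × maslovDomain A C D) :
    (cocycleMap A D h p).2.1.1 + (cocycleMap A D h p).2.1.2 = -(p.1.1.1 + p.2.1.2) :=
  maslovSplit_add h.symm _

theorem apply_add_apply_eq_of_lagrangian (hA : IsLagrangianC f A) (hB : IsLagrangianC f B)
    (hC : IsLagrangianC f C) (hD : IsLagrangianC f D) {a₁ a₂ b b' c c' d₁ d₂ : W}
    (ha₁ : a₁ ∈ A) (ha₂ : a₂ ∈ A) (hb : b ∈ B) (hc : c ∈ C) (hd₁ : d₁ ∈ D) (hd₂ : d₂ ∈ D)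
    (hβ : d₁ + a₁ ∈ B) (hγ : a₂ + d₂ ∈ C) (hbc : b + c = a₁ + a₂) (hb' : b' = b - (d₁ + a₁))
    (hc' : c' = c - (a₂ + d₂)) :
    f b c + f c' b' = f d₁ a₁ + f a₂ d₂ := by
  obtain rfl : c = a₁ + a₂ - b := eq_sub_of_add_eq' hbc
  subst hb' hc'
  have hbb := hB.apply_eq_zero hb hb
  have hbβ := hB.apply_eq_zero hb hβ
  have hββ := hB.apply_eq_zero hβ hβ
  have hcc := hC.apply_eq_zero hc hc
  have hγc := hC.apply_eq_zero hγ hc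
  have hγγ := hC.apply_eq_zero hγ hγ
  simp only [map_add, map_sub, LinearMap.add_apply, LinearMap.sub_apply,
    hA.apply_eq_zero ha₁ ha₁, hA.apply_eq_zero ha₁ ha₂, hA.apply_eq_zero ha₂ ha₁,
    hA.apply_eq_zero ha₂ ha₂, hD.apply_eq_zero hd₁ hd₁, hD.apply_eq_zero hd₂ hd₁,
    hD.apply_eq_zero hd₂ hd₂] at hbb hbβ hββ hcc hγc hγγ ⊢
  linear_combination hγc + hbβ - hbb - hcc - hββ - hγγ

theorem sesqProd_maslovForm_cocycleMap (hA : IsLagrangianC f A) (hB : IsLagrangianC f B)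
    (hC : IsLagrangianC f C) (hD : IsLagrangianC f D) (h : IsCompl B C)
    (p : maslovDomain D B A × maslovDomain A C D) :
    sesqProd (maslovForm f B A C) (maslovForm f C D B) (cocycleMap A D h p) (cocycleMap A D h p) =
      sesqProd (maslovForm f D B A) (maslovForm f A C D) p p := by
  have hfst := cocycleMap_fst_add h p
  have hsnd := cocycleMap_snd_add h p
  set q := cocycleMap A D h p
  have hdiff : q.1.1.1 - (p.1.1.1 + p.1.1.2) - q.2.1.2 =
      q.2.1.1 - (q.1.1.2 - (p.2.1.1 + p.2.1.2)) := by
    linear_combination (norm := module) hfst - hsnd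
  have hmemB := B.sub_mem (B.sub_mem q.1.2.1.1 p.1.2.2) q.2.2.1.2
  have hmemC := C.sub_mem q.2.2.1.1 (C.sub_mem q.1.2.1.2 p.2.2.2)
  have hzero := Submodule.disjoint_def.mp h.disjoint _ hmemB (hdiff ▸ hmemC)
  exact apply_add_apply_eq_of_lagrangian hA hB hC hD p.1.2.1.2 p.2.2.1.1 q.1.2.1.1 q.1.2.1.2
    p.1.2.1.1 p.2.2.1.2 p.1.2.2 p.2.2.2 hfst (sub_eq_zero.mp hzero).symm
    (sub_eq_zero.mp (hdiff ▸ hzero))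

theorem cocycleMap_eq_zero (h : IsCompl B C) {p : maslovDomain D B A × maslovDomain A C D}
    (hp : cocycleMap A D h p = 0) : p.1.1.1 = -p.1.1.2 ∧ p.2.1 = (-p.1.1.2, p.1.1.2) := by
  have hfst := cocycleMap_fst_add h p
  have hsnd := cocycleMap_snd_add h p
  simp only [hp, Prod.fst_zero, Prod.snd_zero, ZeroMemClass.coe_zero, add_zero] at hfst hsnd
  have hβγ : p.1.1.1 + p.1.1.2 = -(p.2.1.1 + p.2.1.2) := by
    linear_combination (norm := module) hsnd - hfst
  have hβ : p.1.1.1 + p.1.1.2 = 0 :=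
    Submodule.disjoint_def.mp h.disjoint _ p.1.2.2 (hβγ ▸ C.neg_mem p.2.2.2)
  refine ⟨eq_neg_of_add_eq_zero_left hβ, Prod.ext (eq_neg_of_add_eq_zero_right hfst.symm) ?_⟩
  linear_combination (norm := module) hsnd - hβ

variable [FiniteDimensional ℂ W]

theorem finrank_ker_cocycleMap_le (h : IsCompl B C) :
    finrank ℂ (LinearMap.ker (cocycleMap A D h)) ≤ finrank ℂ ↥(A ⊓ D) := by
  let ev : maslovDomain D B A × maslovDomain A C D →ₗ[ℂ] W :=
    LinearMap.snd ℂ W W ∘ₗ Submodule.subtype _ ∘ₗ LinearMap.fst ℂ _ _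
  have hdisj : Disjoint (LinearMap.ker (cocycleMap A D h)) (LinearMap.ker ev) := by
    refine Submodule.disjoint_def.mpr fun p hp hev => ?_
    have hev : p.1.1.2 = 0 := hev
    obtain ⟨h₁, h₂⟩ := cocycleMap_eq_zero h hp
    rw [hev, neg_zero] at h₁ h₂
    exact Prod.ext (Subtype.ext (Prod.ext h₁ hev)) (Subtype.ext h₂)
  have hmap : (LinearMap.ker (cocycleMap A D h)).map ev ≤ A ⊓ D := by
    rintro _ ⟨p, hp, rfl⟩
    refine ⟨p.1.2.1.2, ?_⟩
    have hmem := D.neg_mem p.1.2.1.1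
    rwa [(cocycleMap_eq_zero h hp).1, neg_neg] at hmem
  exact finrank_map_of_disjoint_ker hdisj ▸ Submodule.finrank_mono hmap

theorem maslovIndexC_cocycle_le (hf : IsSkewHermitian f) (hsep : f.SeparatingLeft)
    (hA : IsLagrangianC f A) (hB : IsLagrangianC f B) (hC : IsLagrangianC f C)
    (hD : IsLagrangianC f D) (h : IsCompl B C) :
    maslovIndexC f B A C + maslovIndexC f C D B + finrank ℂ ↥(A ⊓ B ⊓ D) +
        finrank ℂ ↥(A ⊓ C ⊓ D) ≤
      maslovIndexC f D B A + maslovIndexC f A C D + finrank ℂ ↥(A ⊓ D) := by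
  rw [maslovIndexC_eq_negIndex hB hC, maslovIndexC_eq_negIndex hC hB,
    maslovIndexC_eq_negIndex hD hA, maslovIndexC_eq_negIndex hA hD,
    ← negIndex_sesqProd (maslovForm_isSymm hf hB hA hC) (maslovForm_isSymm hf hC hD hB),
    ← negIndex_sesqProd (maslovForm_isSymm hf hD hB hA) (maslovForm_isSymm hf hA hC hD)]
  have hle := negIndex_add_finrank_range_le_of_isometry _
    (sesqProd_maslovForm_cocycleMap hA hB hC hD h)
  have hrank := (cocycleMap A D h).finrank_range_add_finrank_ker
  have hker := finrank_ker_cocycleMap_le (A := A) (D := D) h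
  have hBAC : B ⊓ A ⊓ C = ⊥ := by rw [inf_right_comm, h.inf_eq_bot, bot_inf_eq]
  have hCDB : C ⊓ D ⊓ B = ⊥ := by rw [inf_right_comm, h.symm.inf_eq_bot, bot_inf_eq]
  have hDBA : D ⊓ B ⊓ A = A ⊓ B ⊓ D := by rw [inf_right_comm, inf_comm D, inf_right_comm]
  rw [finrank_prod, finrank_maslovDomain hf.isRefl hsep hB hA hC,
    finrank_maslovDomain hf.isRefl hsep hC hD hB, hBAC, hCDB, finrank_bot] at hle
  rw [finrank_prod, finrank_maslovDomain hf.isRefl hsep hD hB hA,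
    finrank_maslovDomain hf.isRefl hsep hA hC hD, hDBA] at hrank
  have hdimA := hA.two_mul_finrank hf.isRefl hsep
  have hdimB := hB.two_mul_finrank hf.isRefl hsep
  have hdimC := hC.two_mul_finrank hf.isRefl hsep
  have hdimD := hD.two_mul_finrank hf.isRefl hsep
  lia

-- Adding the inequality to the one with `B` and `C` exchanged, all indices cancel by
-- `maslovIndexC_add_maslovIndexC_swap`, so both are equalities.
theorem maslovIndexC_cocycle (hf : IsSkewHermitian f) (hsep : f.SeparatingLeft)
    (hA : IsLagrangianC f A) (hB : IsLagrangianC f B) (hC : IsLagrangianC f C)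
    (hD : IsLagrangianC f D) (h : IsCompl B C) :
    maslovIndexC f B A C + maslovIndexC f C D B + finrank ℂ ↥(A ⊓ B ⊓ D) +
        finrank ℂ ↥(A ⊓ C ⊓ D) =
      maslovIndexC f D B A + maslovIndexC f A C D + finrank ℂ ↥(A ⊓ D) := by
  have hle := maslovIndexC_cocycle_le hf hsep hA hB hC hD h
  have hle' := maslovIndexC_cocycle_le hf hsep hA hC hB hD h.symm
  have hABC := maslovIndexC_add_maslovIndexC_swap hf hsep hB hA hC
  have hBCD := maslovIndexC_add_maslovIndexC_swap hf hsep hC hD hB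
  have hABD := maslovIndexC_add_maslovIndexC_swap hf hsep hA hB hD
  have hACD := maslovIndexC_add_maslovIndexC_swap hf hsep hA hC hD
  rw [inf_right_comm, h.inf_eq_bot, bot_inf_eq, finrank_bot, inf_comm B] at hABC
  rw [inf_right_comm, h.symm.inf_eq_bot, bot_inf_eq, finrank_bot, inf_comm D] at hBCD
  have hdimA := hA.two_mul_finrank hf.isRefl hsep
  have hdimB := hB.two_mul_finrank hf.isRefl hsep
  have hdimC := hC.two_mul_finrank hf.isRefl hsep
  lia

theorem maslovIndexC_swap_of_antiisometry (h0 : IsLagrangianC f L0) (h1 : IsLagrangianC f L1)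
    (h2 : IsLagrangianC f L2) (h : IsCompl L0 L2) (R : W →ₗ[ℂ] W) (hR : ∀ v ∈ L1, R v ∈ L1)
    (hanti : ∀ x ∈ L0, ∀ y ∈ L2, ∀ x' ∈ L0, ∀ y' ∈ L2, x + y ∈ L1 → x' + y' = R (x + y) →
      f x' y' = -f x y) :
    maslovIndexC f L2 L1 L0 = maslovIndexC f L0 L1 L2 := by
  let T : maslovDomain L0 L1 L2 →ₗ[ℂ] maslovDomain L0 L1 L2 :=
    maslovSplit h L1 ∘ₗ R.restrict hR ∘ₗ (maslovSum L0 L1 L2).codRestrict L1 fun p => p.2.2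
  have hT (p) : maslovForm f L0 L1 L2 (T p) (T p) = -maslovForm f L0 L1 L2 p p :=
    hanti _ p.2.1.1 _ p.2.1.2 _ (T p).2.1.1 _ (T p).2.1.2 p.2.2 (maslovSplit_add h _)
  rw [maslovIndexC_eq_negIndex h2 h0, maslovIndexC_eq_negIndex h0 h2,
    negIndex_maslovForm_swap h0 h1 h2]
  exact le_antisymm (negIndex_le_of_isometry T hT)
    (negIndex_le_of_isometry T fun p => neg_eq_iff_eq_neg.mpr (hT p))

end Cocycle

section DirectSum

variable {V V' : Type*} [AddCommGroup V] [Module ℂ V] [AddCommGroup V'] [Module ℂ V']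
  {f : V →ₛₗ[starRingEnd ℂ] V →ₗ[ℂ] ℂ} {g : V' →ₛₗ[starRingEnd ℂ] V' →ₗ[ℂ] ℂ}

theorem sesqProd_apply (x y : V × V') : sesqProd f g x y = f x.1 y.1 + g x.2 y.2 :=
  rfl

theorem IsSkewHermitian.neg (hf : IsSkewHermitian f) : IsSkewHermitian (-f) := fun x y => by
  simp [hf x y]

theorem IsSkewHermitian.sesqProd (hf : IsSkewHermitian f) (hg : IsSkewHermitian g) :
    IsSkewHermitian (sesqProd f g) := fun x y => by
  simp only [sesqProd_apply, map_add, hf x.1 y.1, hg x.2 y.2, neg_add]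

theorem separatingLeft_neg (hf : f.SeparatingLeft) : (-f).SeparatingLeft := fun x hx =>
  hf x fun y => neg_eq_zero.mp (hx y)

theorem separatingLeft_sesqProd (hf : f.SeparatingLeft) (hg : g.SeparatingLeft) :
    (sesqProd f g).SeparatingLeft := fun x hx =>
  Prod.ext (hf x.1 fun y => by simpa [sesqProd_apply] using hx (y, 0))
    (hg x.2 fun y => by simpa [sesqProd_apply] using hx (0, y))

theorem IsLagrangianC.neg {L : Submodule ℂ V} (hL : IsLagrangianC f L) : IsLagrangianC (-f) L := by
  refine hL.trans (Submodule.ext fun x => forall₂_congr fun y _ => ?_)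
  simp

theorem IsLagrangianC.prod {L : Submodule ℂ V} {L' : Submodule ℂ V'} (hL : IsLagrangianC f L)
    (hL' : IsLagrangianC g L') : IsLagrangianC (sesqProd f g) (L.prod L') := by
  refine le_antisymm (fun x hx y hy => ?_) fun x hx => ⟨?_, ?_⟩
  · rw [sesqProd_apply, hL.apply_eq_zero hx.1 hy.1, hL'.apply_eq_zero hx.2 hy.2, add_zero]
  · rw [hL]
    exact fun y hy => by simpa [sesqProd_apply] using hx (y, 0) ⟨hy, L'.zero_mem⟩
  · rw [hL']
    exact fun y hy => by simpa [sesqProd_apply] using hx (0, y) ⟨L.zero_mem, hy⟩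

end DirectSum

section Graph

variable {K V V' : Type*} [DivisionRing K] [AddCommGroup V] [Module K V] [AddCommGroup V']
  [Module K V']

theorem isCompl_graph {g h : V →ₗ[K] V'} (hgh : Function.Bijective (g - h)) :
    IsCompl g.graph h.graph := by
  constructor
  · refine Submodule.disjoint_def.mpr fun p hpg hph => ?_
    rw [LinearMap.mem_graph_iff] at hpg hph
    have hzero : p.1 = 0 := hgh.1 (by rw [LinearMap.sub_apply, ← hpg, hph, sub_self, map_zero])
    exact Prod.ext hzero (by rw [hpg, hzero, map_zero, Prod.snd_zero])
  · refine codisjoint_iff.mpr (eq_top_iff.mpr fun p _ => Submodule.mem_sup.mpr ?_)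
    obtain ⟨x, hx⟩ := hgh.2 (p.2 - h p.1)
    refine ⟨(x, g x), rfl, (p.1 - x, h (p.1 - x)), rfl, Prod.ext (add_sub_cancel x p.1) ?_⟩
    rw [LinearMap.sub_apply, sub_eq_sub_iff_add_eq_add] at hx
    change g x + h (p.1 - x) = p.2
    rw [map_sub, ← add_sub_assoc, hx, add_sub_cancel_right]

theorem finrank_prod_inf_graph (S : Submodule K V) (S' : Submodule K V') (g : V →ₗ[K] V') :
    finrank K ↥(S.prod S' ⊓ g.graph) = finrank K ↥(S ⊓ S'.comap g) := by
  have hmap : S.prod S' ⊓ g.graph = (S ⊓ S'.comap g).map (LinearMap.id.prod g) := by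
    ext ⟨x, y⟩
    constructor
    · rintro ⟨⟨hx, hy⟩, hg⟩
      obtain rfl : y = g x := hg
      exact ⟨x, ⟨hx, hy⟩, rfl⟩
    · rintro ⟨z, ⟨hz, hgz⟩, heq⟩
      obtain ⟨rfl, rfl⟩ := Prod.mk.inj heq
      exact ⟨⟨hz, hgz⟩, rfl⟩
  rw [hmap, finrank_map_of_disjoint_ker (by simp [LinearMap.ker_prod])]

theorem finrank_prod_inf_graph_inf_graph_id (S : Submodule K V) (g : V →ₗ[K] V) :
    finrank K ↥(S.prod S ⊓ g.graph ⊓ (LinearMap.id : V →ₗ[K] V).graph) =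
      finrank K ↥(LinearMap.ker (g - LinearMap.id) ⊓ S) := by
  have hmap : S.prod S ⊓ g.graph ⊓ (LinearMap.id : V →ₗ[K] V).graph =
      (LinearMap.ker (g - LinearMap.id) ⊓ S).map (LinearMap.id.prod LinearMap.id) := by
    ext ⟨x, y⟩
    constructor
    · rintro ⟨⟨⟨hx, -⟩, hg⟩, hid⟩
      obtain rfl : y = x := hid
      exact ⟨y, ⟨sub_eq_zero.mpr (Eq.symm hg), hx⟩, rfl⟩
    · rintro ⟨z, ⟨hg, hz⟩, heq⟩
      obtain ⟨rfl, rfl⟩ := Prod.mk.inj heq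
      exact ⟨⟨⟨hz, hz⟩, (sub_eq_zero.mp hg).symm⟩, rfl⟩
  rw [hmap, finrank_map_of_disjoint_ker (by simp [LinearMap.ker_prod])]

end Graph

section TwistedGraph

variable {V : Type*} [AddCommGroup V] [Module ℂ V] {σ : V →ₛₗ[starRingEnd ℂ] V →ₗ[ℂ] ℂ}
  {P : Submodule ℂ V} {θ : V →ₗ[ℂ] V} {α : ℂ}

theorem injective_of_isometry (hsep : σ.SeparatingLeft) (hθ : ∀ x y, σ (θ x) (θ y) = σ x y) :
    Function.Injective θ :=
  (injective_iff_map_eq_zero θ).mpr fun x hx => hsep x fun y => by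
    rw [← hθ, hx, map_zero, LinearMap.zero_apply]

theorem isLagrangianC_graph [FiniteDimensional ℂ V] (hsep : σ.SeparatingLeft)
    (hθ : ∀ x y, σ (θ x) (θ y) = σ x y) : IsLagrangianC (sesqProd (-σ) σ) θ.graph := by
  have hsurj := LinearMap.injective_iff_surjective.mp (injective_of_isometry hsep hθ)
  refine le_antisymm (fun p hp q hq => ?_) fun p hp => ?_
  · rw [LinearMap.mem_graph_iff] at hp hq
    simp [sesqProd_apply, hp, hq, hθ]
  · refine (LinearMap.mem_graph_iff θ p).mpr (sub_eq_zero.mp (hsep _ fun y => ?_))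
    obtain ⟨x, rfl⟩ := hsurj y
    have hpx : -σ p.1 x + σ p.2 (θ x) = 0 := hp (x, θ x) rfl
    rw [map_sub, LinearMap.sub_apply, hθ, ← hpx, neg_add_eq_sub]

theorem smul_isometry (hθ : ∀ x y, σ (θ x) (θ y) = σ x y) (hα : ‖α‖ = 1) (x y : V) :
    σ ((α • θ) x) ((α • θ) y) = σ x y := by
  simp [hθ, ← mul_assoc, Complex.mul_conj', hα]

theorem isCompl_graph_smul_graph [FiniteDimensional ℂ V] (hθ : Function.Injective θ)
    (hα : α ≠ 1) : IsCompl (α • θ).graph θ.graph := by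
  apply isCompl_graph
  have hsub : α • θ - θ = (α - 1) • θ := by rw [sub_smul, one_smul]
  have hinj : Function.Injective (α • θ - θ) := by
    rw [hsub]
    exact (smul_right_injective V (sub_ne_zero.mpr hα)).comp hθ
  exact ⟨hinj, LinearMap.injective_iff_surjective.mp hinj⟩

-- With `u = x + y` and `w = α • x + y` one has `(α - 1) • x = w - u` and `(α - 1) • y = α • u - w`.
theorem sub_one_mul_apply_graph_of_add_mem (hP : IsLagrangianC σ P)
    (hθ : ∀ x y, σ (θ x) (θ y) = σ x y) {x y : V} (hmem : x + y ∈ P)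
    (hmem' : θ (α • x + y) ∈ P) :
    (α - 1) * sesqProd (-σ) σ (x, α • θ x) (y, θ y) =
      α * σ (α • x + y) (x + y) + σ (x + y) (α • x + y) := by
  have hu : σ (x + y) (x + y) = 0 := hP.apply_eq_zero hmem hmem
  have hw : σ (α • x + y) (α • x + y) = 0 := by
    rw [← hθ]
    exact hP.apply_eq_zero hmem' hmem'
  simp only [sesqProd_apply, map_add, map_smulₛₗ, LinearMap.add_apply, LinearMap.smul_apply,
    LinearMap.neg_apply, smul_eq_mul, hθ] at hu hw ⊢
  linear_combination -hw - α * hu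

-- The reflection `(u, v) ↦ (-u, v)` preserves `P × P` and changes the sign of the Maslov form.
theorem maslovIndexC_graph_swap [FiniteDimensional ℂ V] (hsep : σ.SeparatingLeft)
    (hP : IsLagrangianC σ P) (hθ : ∀ x y, σ (θ x) (θ y) = σ x y) (hα : ‖α‖ = 1) (hα1 : α ≠ 1) :
    maslovIndexC (sesqProd (-σ) σ) θ.graph (P.prod P) (α • θ).graph =
      maslovIndexC (sesqProd (-σ) σ) (α • θ).graph (P.prod P) θ.graph := by
  have hinj := injective_of_isometry hsep hθ
  refine maslovIndexC_swap_of_antiisometry (isLagrangianC_graph hsep (smul_isometry hθ hα))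
    (hP.neg.prod hP) (isLagrangianC_graph hsep hθ) (isCompl_graph_smul_graph hinj hα1)
    ((-LinearMap.id).prodMap LinearMap.id) (fun v hv => ⟨P.neg_mem hv.1, hv.2⟩) ?_
  rintro ⟨x, a⟩ hx ⟨y, b⟩ hy ⟨x', a'⟩ hx' ⟨y', b'⟩ hy' ⟨hmem, hmem'⟩ heq
  obtain rfl : a = α • θ x := hx
  obtain rfl : b = θ y := hy
  obtain rfl : a' = α • θ x' := hx'
  obtain rfl : b' = θ y' := hy'
  obtain ⟨hfst, hsnd⟩ := Prod.mk.inj heq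
  have hsum : x' + y' = -(x + y) := hfst
  have hθsum : θ (α • x' + y') = θ (α • x + y) := by
    rw [map_add, map_add, map_smul, map_smul]
    exact hsnd
  have hxy : x + y ∈ P := hmem
  have hθxy : θ (α • x + y) ∈ P := by
    rw [map_add, map_smul]
    exact hmem'
  refine mul_left_cancel₀ (sub_ne_zero.mpr hα1) ?_
  rw [mul_neg, sub_one_mul_apply_graph_of_add_mem hP hθ hxy hθxy,
    sub_one_mul_apply_graph_of_add_mem hP hθ (hsum ▸ P.neg_mem hxy) (hθsum ▸ hθxy), hsum,
    hinj hθsum]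
  simp only [map_neg, LinearMap.neg_apply]
  ring

theorem finrank_prod_inf_graph_smul (hα : α ≠ 0) :
    finrank ℂ ↥(P.prod P ⊓ (α • θ).graph) = finrank ℂ ↥(P.prod P ⊓ θ.graph) := by
  rw [finrank_prod_inf_graph, finrank_prod_inf_graph, Submodule.comap_smul _ _ _ hα]

theorem ker_smul_sub_id (hα : α ≠ 0) :
    LinearMap.ker (α • θ - LinearMap.id) = LinearMap.ker (θ - α⁻¹ • LinearMap.id) := by
  rw [← LinearMap.ker_smul (θ - α⁻¹ • LinearMap.id) α hα, smul_sub, smul_inv_smul₀ hα]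

theorem finrank_graph_inf_graph_id :
    finrank ℂ ↥(θ.graph ⊓ (LinearMap.id : V →ₗ[ℂ] V).graph) =
      finrank ℂ ↥(LinearMap.ker (θ - LinearMap.id)) := by
  have hfix := finrank_prod_inf_graph_inf_graph_id ⊤ θ
  rwa [Submodule.prod_top, top_inf_eq, inf_top_eq] at hfix

theorem maslovIndexC_graph_prod_graph_add [FiniteDimensional ℂ V] (hσ : IsSkewHermitian σ)
    (hsep : σ.SeparatingLeft) (hP : IsLagrangianC σ P) (hθ : ∀ x y, σ (θ x) (θ y) = σ x y)
    (hα : ‖α‖ = 1) (hα1 : α ≠ 1) :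
    maslovIndexC (sesqProd (-σ) σ) (α • θ).graph (P.prod P) θ.graph +
      finrank ℂ ↥(P.prod P ⊓ θ.graph) = finrank ℂ P := by
  have hα0 : α ≠ 0 := norm_ne_zero_iff.mp (hα ▸ one_ne_zero)
  have hf := hσ.neg.sesqProd hσ
  have hfsep := separatingLeft_sesqProd (separatingLeft_neg hsep) hsep
  have hA : IsLagrangianC (sesqProd (-σ) σ) (P.prod P) := hP.neg.prod hP
  have hB := isLagrangianC_graph hsep (smul_isometry hθ hα)
  have hBC := (isCompl_graph_smul_graph (injective_of_isometry hsep hθ) hα1).inf_eq_bot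
  have hswap := maslovIndexC_add_maslovIndexC_swap hf hfsep hB hA (isLagrangianC_graph hsep hθ)
  rw [maslovIndexC_graph_swap hsep hP hθ hα hα1, inf_right_comm, hBC, bot_inf_eq, finrank_bot,
    inf_comm (α • θ).graph, finrank_prod_inf_graph_smul hα0] at hswap
  have hdim : finrank ℂ (P.prod P) = finrank ℂ P + finrank ℂ P := finrank_submodule_prod P P
  have hdimA := hA.two_mul_finrank hf.isRefl hfsep
  have hdimB := hB.two_mul_finrank hf.isRefl hfsep
  lia

end TwistedGraph

theorem maslov_index_comparison_root_of_unity_general {V : Type*} [AddCommGroup V] [Module ℂ V]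
    [FiniteDimensional ℂ V] {σ : V →ₛₗ[starRingEnd ℂ] V →ₗ[ℂ] ℂ} {P : Submodule ℂ V}
    {θ : V →ₗ[ℂ] V} {α : ℂ} (hσ : IsSkewHermitian σ) (hsep : σ.SeparatingLeft)
    (hP : IsLagrangianC σ P) (hθ : ∀ x y, σ (θ x) (θ y) = σ x y) (hα : ‖α‖ = 1) (hα1 : α ≠ 1) :
    (maslovIndexC (sesqProd (-σ) σ) (P.prod P) (α • θ).graph LinearMap.id.graph : ℤ) -
        maslovIndexC (sesqProd (-σ) σ) (P.prod P) θ.graph LinearMap.id.graph =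
      -maslovIndexC (sesqProd (-σ) σ) θ.graph LinearMap.id.graph (α • θ).graph + finrank ℂ P +
        (-finrank ℂ ↥(LinearMap.ker (θ - LinearMap.id) ⊓ P) +
          finrank ℂ ↥(LinearMap.ker (θ - α⁻¹ • LinearMap.id) ⊓ P) -
          finrank ℂ ↥(LinearMap.ker (θ - α⁻¹ • LinearMap.id))) := by
  have hα0 : α ≠ 0 := norm_ne_zero_iff.mp (hα ▸ one_ne_zero)
  have hf := hσ.neg.sesqProd hσ
  have hfsep := separatingLeft_sesqProd (separatingLeft_neg hsep) hsep
  have hA : IsLagrangianC (sesqProd (-σ) σ) (P.prod P) := hP.neg.prod hP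
  have hB := isLagrangianC_graph hsep (smul_isometry hθ hα)
  have hC := isLagrangianC_graph hsep hθ
  have hD := isLagrangianC_graph (σ := σ) (θ := LinearMap.id) hsep fun _ _ => rfl
  have hBC := isCompl_graph_smul_graph (injective_of_isometry hsep hθ) hα1
  have hcocycle := maslovIndexC_cocycle hf hfsep hA hB hC hD hBC
  have hswap := maslovIndexC_add_maslovIndexC_swap hf hfsep hA hB hD
  have hBAC := maslovIndexC_graph_prod_graph_add hσ hsep hP hθ hα hα1
  rw [finrank_prod_inf_graph_smul hα0, finrank_graph_inf_graph_id, finrank_submodule_prod,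
    finrank_prod_inf_graph_inf_graph_id, ker_smul_sub_id hα0] at hswap
  rw [finrank_prod_inf_graph_inf_graph_id, finrank_prod_inf_graph_inf_graph_id,
    ker_smul_sub_id hα0] at hcocycle
  lia

section Standard

variable {n : ℕ}

theorem sigmaC_apply (x y : CV n) :
    sigmaC n x y = (∑ i, (starRingEnd ℂ) (x (Sum.inl i)) * y (Sum.inr i)) -
      ∑ i, (starRingEnd ℂ) (x (Sum.inr i)) * y (Sum.inl i) :=
  rfl

theorem sigmaC_eq_neg_dotProduct (x y : CV n) :
    sigmaC n x y = -(star x ⬝ᵥ ((symplJ n).map Complex.ofReal).mulVec y) := by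
  have hJ : (symplJ n).map Complex.ofReal = Matrix.fromBlocks 0 (-1) 1 0 := by
    simp [symplJ, Matrix.fromBlocks_map, Matrix.map_zero, Matrix.map_one, Matrix.map_neg]
  simp [hJ, sigmaC_apply, Matrix.fromBlocks_mulVec, dotProduct, Fintype.sum_sum_type,
    Matrix.neg_mulVec, sub_eq_neg_add]

theorem sigmaC_cAction {Θ : Matrix (Fin n ⊕ Fin n) (Fin n ⊕ Fin n) ℝ}
    (hΘ : Θ.transpose * symplJ n * Θ = symplJ n) (x y : CV n) :
    sigmaC n (cAction Θ x) (cAction Θ y) = sigmaC n x y := by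
  have hstar : (Θ.map Complex.ofReal).conjTranspose = Θ.transpose.map Complex.ofReal := by
    ext i j
    simp
  have hmap : (Θ.map Complex.ofReal).conjTranspose * (symplJ n).map Complex.ofReal *
      Θ.map Complex.ofReal = (symplJ n).map Complex.ofReal := by
    have hΘ' := congrArg (fun M => M.map Complex.ofRealHom) hΘ
    simp only [Matrix.map_mul] at hΘ'
    rwa [hstar]
  rw [sigmaC_eq_neg_dotProduct, sigmaC_eq_neg_dotProduct, cAction, Matrix.mulVecLin_apply,
    Matrix.mulVecLin_apply, Matrix.star_mulVec, ← Matrix.dotProduct_mulVec, Matrix.mulVec_mulVec,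
    Matrix.mulVec_mulVec, hmap]

variable (n)

theorem sigmaC_isSkewHermitian : IsSkewHermitian (sigmaC n) := fun x y => by
  simp [sigmaC_apply, mul_comm]

theorem sigmaC_separatingLeft : (sigmaC n).SeparatingLeft := by
  refine fun x hx => funext (Sum.rec (fun i => ?_) fun i => ?_)
  · simpa [sigmaC_apply, Pi.single_apply] using hx (Pi.single (Sum.inr i) 1)
  · simpa [sigmaC_apply, Pi.single_apply] using hx (Pi.single (Sum.inl i) 1)

theorem PiV_isLagrangianC : IsLagrangianC (sigmaC n) (PiV n) := by
  refine le_antisymm (fun x hx y hy => ?_) fun x hx i => ?_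
  · have hx : ∀ i, x (Sum.inr i) = 0 := hx
    have hy : ∀ i, y (Sum.inr i) = 0 := hy
    simp [sigmaC_apply, hx, hy]
  · simpa [sigmaC_apply, Pi.single_apply] using
      hx (Pi.single (Sum.inl i) 1) fun j => Pi.single_eq_of_ne Sum.inr_ne_inl 1

theorem finrank_PiV : finrank ℂ (PiV n) = n := by
  have hdim := (PiV_isLagrangianC n).two_mul_finrank (sigmaC_isSkewHermitian n).isRefl
    (sigmaC_separatingLeft n)
  rw [finrank_fintype_fun_eq_card, Fintype.card_sum, Fintype.card_fin] at hdim
  lia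

end Standard

/-- comparison of the Maslov indices `i(Π², Γ(ωʲΘ), Δ)` and
`i(Π², Γ(Θ), Δ)` in terms of `i(Γ(Θ), Δ, Γ(ωʲΘ))` and dimensions of eigenspaces. -/
theorem maslov_index_comparison_root_of_unity
    (n k : ℕ) (Θ : Matrix (Fin n ⊕ Fin n) (Fin n ⊕ Fin n) ℝ)
    (hΘ : Θ.transpose * symplJ n * Θ = symplJ n)
    (ω : ℂ) (hω : IsPrimitiveRoot ω k) (j : ℕ) (hj1 : 1 ≤ j) (hj2 : j ≤ k - 1) :
    (maslovIndexC (sigma2C n) (Pi2Sub n)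
        (LinearMap.graph ((ω ^ j) • cAction Θ)) (DiaSub n) : ℤ)
      - (maslovIndexC (sigma2C n) (Pi2Sub n)
          (LinearMap.graph (cAction Θ)) (DiaSub n) : ℤ)
    = -(maslovIndexC (sigma2C n) (LinearMap.graph (cAction Θ)) (DiaSub n)
          (LinearMap.graph ((ω ^ j) • cAction Θ)) : ℤ)
      + (n : ℤ)
      + (-(Module.finrank ℂ
            ↥(LinearMap.ker (cAction Θ - LinearMap.id) ⊓ PiV n) : ℤ)
        + (Module.finrank ℂ
            ↥(LinearMap.ker (cAction Θ - ((ω ^ j)⁻¹ : ℂ) • LinearMap.id) ⊓ PiV n) : ℤ)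
        - (Module.finrank ℂ
            ↥(LinearMap.ker (cAction Θ - ((ω ^ j)⁻¹ : ℂ) • LinearMap.id)) : ℤ)) := by
  have hnorm : ‖ω ^ j‖ = 1 := by rw [norm_pow, hω.norm'_eq_one (by lia), one_pow]
  have hne : ω ^ j ≠ 1 := hω.pow_ne_one_of_pos_of_lt (by lia) (by lia)
  simpa only [sigma2C, Pi2Sub, DiaSub, finrank_PiV] using
    maslov_index_comparison_root_of_unity_general (sigmaC_isSkewHermitian n)
      (sigmaC_separatingLeft n) (PiV_isLagrangianC n) (sigmaC_cAction hΘ) hnorm hne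

end
end

section
/- Let Θ be a real symplectic 2n×2n matrix acting ℂ-linearly on ℂ^{2n}, k ≥ 1 and ω a primitive k-th root of unity. With Γ = {(ξ1,…,ξk, Θξ1,…,Θξk)}, Π^{2k} = Π × ⋯ × Π (2k factors) and Δ^↺ = {(ξ1,…,ξk, ξ2, ξ3,…,ξk, ξ1)} inside Σ^k × Σ^k, Σ = ℂ^{2n}, one has dim_ℂ(Γ ∩ Π^{2k} ∩ Δ^↺) = Σ_{j=0}^{k−1} dim_ℂ(ker(Θ − ωʲ) ∩ Π). -/
open scoped ComplexOrder

noncomputable section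

/-!
Let `T` be an endomorphism (here the action of `Θ`) and `P` a subspace (here `Π`). A point of the
triple intersection is determined by its first entry `v`: it is the orbit `(v, Tv, …, Tᵏ⁻¹v)`
paired with its image under `T`, and the conditions on it say that `Tᵏv = v` and that the orbit
stays in `P`. Such `v` form a `T`-invariant subspace on which `Tᵏ = 1`. Since `Xᵏ - 1` is the
product of the distinct factors `X - ωʲ`, this subspace is the direct sum of its intersections with
the eigenspaces of `T` for the eigenvalues `ωʲ`. The orbit of an eigenvector stays on its line, so
an eigenvector lies in the subspace as soon as it lies in `P`.
-/

open Module (finrank)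
open Module.End (eigenspace)
open Polynomial

section Diagonalization

variable {K V ι : Type*} [Field K] [AddCommGroup V] [Module K V] [Fintype ι]

lemma aeval_lagrangeBasis_apply_mem_eigenspace [DecidableEq ι] {f : Module.End K V} {μ : ι → K}
    (hf : aeval f (Lagrange.nodal Finset.univ μ) = 0) (i : ι) (v : V) :
    aeval f (Lagrange.basis Finset.univ μ i) v ∈ eigenspace f (μ i) := by
  have nodal_dvd : Lagrange.nodal Finset.univ μ ∣
      (X - C (μ i)) * Lagrange.basis Finset.univ μ i := by
    rw [Lagrange.basis_eq_prod_sub_inv_mul_nodal_div (Finset.mem_univ i),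
      ← Lagrange.nodal_erase_eq_nodal_div (Finset.mem_univ i), mul_left_comm,
      ← Lagrange.nodal_eq_mul_nodal_erase (Finset.mem_univ i)]
    exact dvd_mul_left _ _
  have annihilates : aeval f ((X - C (μ i)) * Lagrange.basis Finset.univ μ i) = 0 :=
    zero_dvd_iff.mp (hf ▸ map_dvd (aeval f) nodal_dvd)
  rw [Module.End.mem_eigenspace_iff, ← sub_eq_zero]
  simpa using LinearMap.congr_fun annihilates v

lemma iSup_eigenspace_eq_top_of_aeval_nodal_eq_zero {f : Module.End K V} {μ : ι → K}
    (hμ : Function.Injective μ) (hf : aeval f (Lagrange.nodal Finset.univ μ) = 0) :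
    ⨆ i, eigenspace f (μ i) = ⊤ := by
  classical
  rw [eq_top_iff]
  intro v _
  cases isEmpty_or_nonempty ι
  · have : v = 0 := by simpa using LinearMap.congr_fun hf v
    exact this ▸ zero_mem _
  · have decomposition : ∑ i, aeval f (Lagrange.basis Finset.univ μ i) v = v := by
      rw [← LinearMap.sum_apply, ← map_sum, Lagrange.sum_basis hμ.injOn Finset.univ_nonempty,
        map_one, Module.End.one_apply]
    rw [← decomposition]
    exact sum_mem fun i _ => Submodule.mem_iSup_of_mem i
      (aeval_lagrangeBasis_apply_mem_eigenspace hf i v)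

lemma finrank_eq_sum_finrank_eigenspace [FiniteDimensional K V] {f : Module.End K V} {μ : ι → K}
    (hμ : Function.Injective μ) (hf : aeval f (Lagrange.nodal Finset.univ μ) = 0) :
    finrank K V = ∑ i, finrank K (eigenspace f (μ i)) := by
  classical
  have internal : DirectSum.IsInternal fun i => eigenspace f (μ i) :=
    DirectSum.isInternal_submodule_of_iSupIndep_of_iSup_eq_top
      (f.eigenspaces_iSupIndep.comp hμ) (iSup_eigenspace_eq_top_of_aeval_nodal_eq_zero hμ hf)
  rw [← (LinearEquiv.ofBijective (DirectSum.coeLinearMap _) internal).finrank_eq,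
    Module.finrank_directSum]

end Diagonalization

section RootsOfUnity

lemma nodal_pow_eq_X_pow_sub_one {R : Type*} [CommRing R] [IsDomain R] {k : ℕ} [NeZero k] {ω : R}
    (hω : IsPrimitiveRoot ω k) :
    Lagrange.nodal Finset.univ (fun j : Fin k => ω ^ (j : ℕ)) = X ^ k - 1 := by
  rw [Lagrange.nodal_eq, Fin.prod_univ_eq_prod_range (fun j => X - C (ω ^ j)) k,
    X_pow_sub_one_eq_prod (NeZero.pos k) hω]
  refine Finset.prod_nbij (ω ^ ·) (fun j _ => ?_) (fun i hi j hj h => ?_) (fun ζ hζ => ?_)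
    fun _ _ => rfl
  · rw [mem_nthRootsFinset (NeZero.pos k), pow_right_comm, hω.pow_eq_one, one_pow]
  · exact hω.pow_inj (Finset.mem_range.mp hi) (Finset.mem_range.mp hj) h
  · obtain ⟨j, hj, rfl⟩ :=
      hω.eq_pow_of_pow_eq_one ((mem_nthRootsFinset (NeZero.pos k) 1).mp hζ)
    exact ⟨j, Finset.mem_coe.mpr (Finset.mem_range.mpr hj), rfl⟩

variable {K V : Type*} [Field K] [AddCommGroup V] [Module K V] [FiniteDimensional K V]

lemma finrank_eq_sum_finrank_eigenspace_of_pow_eq_one {k : ℕ} [NeZero k] {ω : K}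
    (hω : IsPrimitiveRoot ω k) {f : Module.End K V} (hf : f ^ k = 1) :
    finrank K V = ∑ j ∈ Finset.range k, finrank K (eigenspace f (ω ^ j)) := by
  rw [← Fin.sum_univ_eq_sum_range (fun j => finrank K (eigenspace f (ω ^ j)))]
  refine finrank_eq_sum_finrank_eigenspace (fun i j h => Fin.ext (hω.pow_inj i.2 j.2 h)) ?_
  simp [nodal_pow_eq_X_pow_sub_one hω, hf]

lemma finrank_eq_sum_finrank_inf_eigenspace_of_pow_apply_eq {k : ℕ} [NeZero k] {ω : K}
    (hω : IsPrimitiveRoot ω k) {f : Module.End K V} {W : Submodule K V}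
    (hfW : ∀ v ∈ W, f v ∈ W) (hf : ∀ v ∈ W, (f ^ k) v = v) :
    finrank K W = ∑ j ∈ Finset.range k, finrank K ↥(W ⊓ eigenspace f (ω ^ j)) := by
  have restrict_pow : f.restrict hfW ^ k = 1 := by
    rw [Module.End.pow_restrict]
    ext v
    exact hf v v.2
  rw [finrank_eq_sum_finrank_eigenspace_of_pow_eq_one hω restrict_pow]
  refine Finset.sum_congr rfl fun j _ => ?_
  rw [eigenspace, eigenspace, Submodule.inf_genEigenspace f W hfW, Submodule.finrank_map_subtype_eq]

end RootsOfUnity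

section PeriodicOrbits

variable {R M : Type*} [CommRing R] [AddCommGroup M] [Module R M]

/-- The `k`-periodic points of `T` whose whole orbit lies in `P`: the space of initial entries of
the points of the triple intersection. `k` need not be the minimal period. -/
def periodicOrbitSubmodule (T : Module.End R M) (P : Submodule R M) (k : ℕ) : Submodule R M :=
  LinearMap.eqLocus (T ^ k) 1 ⊓ ⨅ m : ℕ, P.comap (T ^ m)

variable {T : Module.End R M} {P : Submodule R M} {k : ℕ}

lemma mem_periodicOrbitSubmodule {v : M} :
    v ∈ periodicOrbitSubmodule T P k ↔ (T ^ k) v = v ∧ ∀ m : ℕ, (T ^ m) v ∈ P := by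
  simp [periodicOrbitSubmodule]

lemma apply_mem_periodicOrbitSubmodule {v : M} (hv : v ∈ periodicOrbitSubmodule T P k) :
    T v ∈ periodicOrbitSubmodule T P k := by
  rw [mem_periodicOrbitSubmodule] at hv ⊢
  simp only [← Module.End.mul_apply, ← pow_succ]
  refine ⟨?_, fun m => hv.2 (m + 1)⟩
  rw [pow_succ', Module.End.mul_apply, hv.1]

lemma periodicOrbitSubmodule_inf_eigenspace {μ : R} (hμ : μ ^ k = 1) :
    periodicOrbitSubmodule T P k ⊓ eigenspace T μ = eigenspace T μ ⊓ P := by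
  ext v
  simp only [Submodule.mem_inf, mem_periodicOrbitSubmodule]
  constructor
  · rintro ⟨⟨-, orbit_mem⟩, hv⟩
    exact ⟨hv, by simpa using orbit_mem 0⟩
  · rintro ⟨hv, hvP⟩
    have pow_apply (m : ℕ) : (T ^ m) v = μ ^ m • v := by
      induction m with
      | zero => simp
      | succ m ih =>
        rw [pow_succ', Module.End.mul_apply, ih, map_smul, Module.End.mem_eigenspace_iff.mp hv,
          smul_smul, pow_succ]
    refine ⟨⟨by rw [pow_apply, hμ, one_smul], fun m => ?_⟩, hv⟩
    rw [pow_apply]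
    exact P.smul_mem _ hvP

lemma pow_apply_zero_of_apply_add_one [NeZero k] {x : Fin k → M} (hx : ∀ i, x (i + 1) = T (x i))
    (m : ℕ) : (T ^ m) (x 0) = x (Fin.ofNat k m) := by
  induction m with
  | zero => rfl
  | succ m ih =>
    have : Fin.ofNat k (m + 1) = Fin.ofNat k m + 1 := by
      ext
      simp [Fin.val_add]
    rw [pow_succ', Module.End.mul_apply, ih, ← hx, this]

lemma pow_val_add_one_apply [NeZero k] {v : M} (hv : (T ^ k) v = v) (i : Fin k) :
    (T ^ ((i + 1 : Fin k) : ℕ)) v = (T ^ ((i : ℕ) + 1)) v := by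
  have periodic : Function.IsPeriodicPt T k v := by
    rwa [Function.IsPeriodicPt, Function.IsFixedPt, ← Module.End.pow_apply]
  rw [Fin.val_add, Fin.val_one', Nat.add_mod_mod, Module.End.pow_apply, Module.End.pow_apply,
    periodic.iterate_mod_apply]

variable (T k) in
/-- The linear map `v ↦ ((v, Tv, …, Tᵏ⁻¹v), (Tv, T²v, …, Tᵏv))`, pairing a length-`k` orbit segment
with its image under `T`. It parametrizes the triple intersection by
`periodicOrbitSubmodule T P k`. -/
def orbitPair : M →ₗ[R] (Fin k → M) × (Fin k → M) :=
  (LinearMap.pi fun i : Fin k => T ^ (i : ℕ)).prod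
    (LinearMap.pi fun i : Fin k => T ^ ((i : ℕ) + 1))

lemma orbitPair_injective [NeZero k] : Function.Injective (orbitPair T k) := fun v w h => by
  simpa [orbitPair] using congrFun (congrArg Prod.fst h) 0

lemma map_orbitPair_periodicOrbitSubmodule [NeZero k] :
    (periodicOrbitSubmodule T P k).map (orbitPair T k) =
      (LinearMap.pi fun i : Fin k => T.comp (LinearMap.proj i)).graph ⊓
        (Submodule.pi Set.univ fun _ : Fin k => P).prod
          (Submodule.pi Set.univ fun _ : Fin k => P) ⊓
        (LinearMap.funLeft R M fun i : Fin k => i + 1).graph := by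
  ext ⟨x, y⟩
  simp only [Submodule.mem_map, Submodule.mem_inf, LinearMap.mem_graph_iff, Submodule.mem_prod,
    Submodule.mem_pi, Set.mem_univ, true_imp_iff]
  constructor
  · rintro ⟨v, hv, hxy⟩
    obtain ⟨periodic, orbit_mem⟩ := mem_periodicOrbitSubmodule.mp hv
    obtain ⟨rfl, rfl⟩ := Prod.mk.inj hxy
    exact ⟨⟨funext fun i => LinearMap.congr_fun (pow_succ' T i) v,
      fun i => orbit_mem i, fun i => orbit_mem (i + 1)⟩,
      funext fun i => (pow_val_add_one_apply periodic i).symm⟩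
  · rintro ⟨⟨rfl, hxP, -⟩, hshift⟩
    have orbit : ∀ m : ℕ, (T ^ m) (x 0) = x (Fin.ofNat k m) :=
      pow_apply_zero_of_apply_add_one fun i => (congrFun hshift i).symm
    have orbit_val (i : Fin k) : (T ^ (i : ℕ)) (x 0) = x i := by simp [orbit]
    refine ⟨x 0, mem_periodicOrbitSubmodule.mpr ⟨by simp [orbit], fun m => ?_⟩,
      Prod.ext (funext orbit_val) (funext fun i => ?_)⟩
    · exact orbit m ▸ hxP _
    · exact (LinearMap.congr_fun (pow_succ' T i) (x 0)).trans (congrArg T (orbit_val i))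

end PeriodicOrbits

theorem dim_triple_intersection_iteration_general {K V : Type*} [Field K] [AddCommGroup V]
    [Module K V] [FiniteDimensional K V] {k : ℕ} [NeZero k] (T : Module.End K V)
    (P : Submodule K V) {ω : K} (hω : IsPrimitiveRoot ω k) :
    finrank K ↥((LinearMap.pi fun i : Fin k => T.comp (LinearMap.proj i)).graph ⊓
        (Submodule.pi Set.univ fun _ : Fin k => P).prod
          (Submodule.pi Set.univ fun _ : Fin k => P) ⊓
        (LinearMap.funLeft K V fun i : Fin k => i + 1).graph)
      = ∑ j ∈ Finset.range k, finrank K ↥(LinearMap.ker (T - ω ^ j • LinearMap.id) ⊓ P) := by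
  rw [← map_orbitPair_periodicOrbitSubmodule,
    ← (Submodule.equivMapOfInjective _ orbitPair_injective _).finrank_eq,
    finrank_eq_sum_finrank_inf_eigenspace_of_pow_apply_eq hω
      (fun _ => apply_mem_periodicOrbitSubmodule)
      (fun _ hv => (mem_periodicOrbitSubmodule.mp hv).1)]
  refine Finset.sum_congr rfl fun j _ => ?_
  have pow_eq_one : (ω ^ j) ^ k = 1 := by rw [pow_right_comm, hω.pow_eq_one, one_pow]
  rw [periodicOrbitSubmodule_inf_eigenspace pow_eq_one, Module.End.eigenspace_def,
    Module.End.one_eq_id]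

/-- the dimension of the triple intersection `Γ ∩ Π^{2k} ∩ Δ^↺` is the
sum of the dimensions of the intersections of the `ωʲ`-eigenspaces of `Θ` with the
vertical fibre `Π`. -/
theorem dim_triple_intersection_iteration
    (n k : ℕ) [NeZero k] (hk : 1 ≤ k)
    (Θ : Matrix (Fin n ⊕ Fin n) (Fin n ⊕ Fin n) ℝ)
    (hΘ : Θ.transpose * symplJ n * Θ = symplJ n)
    (ω : ℂ) (hω : IsPrimitiveRoot ω k) :
    Module.finrank ℂ ↥(GamSub n k Θ ⊓ Pi2kSub n k ⊓ DcycSub n k)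
      = ∑ j ∈ Finset.range k,
          Module.finrank ℂ
            ↥(LinearMap.ker (cAction Θ - (ω ^ j : ℂ) • LinearMap.id) ⊓ PiV n) := by
  exact dim_triple_intersection_iteration_general (cAction Θ) (PiV n) hω

end
end

section
/- Let (Σ, σ) be a 2n-dimensional real symplectic vector space, Π ⊂ Σ a Lagrangian subspace, B ⊂ Σ a Lagrangian complement of Π (Σ = Π ⊕ B), and Θ1, Θ2 : Σ → Σ linear symplectomorphisms. On Σ⁴ equipped with the symplectic form (−σ) ⊕ (−σ) ⊕ σ ⊕ σ, the subspaces L0 = Π × Π × Π × Π, L1 = {(ξ1, ξ2, Θ1ξ1, Θ2ξ2) : ξ1, ξ2 ∈ Σ}, and L2 = {(ν1, α + X, α + X, ν2) : ν1, ν2, α ∈ Π, X ∈ B} are Lagrangian, and the following hold: i(L0, L1, L2) = i(Θ2^{−1}(Π), Π, Θ1(Π)) (the right-hand side computed in (Σ, σ)); dim(L1 ∩ L0) = dim(Θ1(Π) ∩ Π) + dim(Θ2^{−1}(Π) ∩ Π); and dim(L1 ∩ L0 ∩ L2) = dim(Θ2^{−1}(Π) ∩ Π ∩ Θ1(Π)).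 -/
/-- The symplectic (skew) orthogonal of a subspace `W` with respect to a bilinear form `σ`:
`W^⊥ = {u : σ u w = 0 for all w ∈ W}`. -/
def sympOrth {E : Type*} [AddCommGroup E] [Module ℝ E]
    (σ : LinearMap.BilinForm ℝ E) (W : Submodule ℝ E) : Submodule ℝ E where
  carrier := {u | ∀ w ∈ W, σ u w = 0}
  add_mem' := by
    intro a b ha hb w hw
    simp [map_add, ha w hw, hb w hw]
  zero_mem' := by
    intro w hw
    simp
  smul_mem' := by
    intro c u hu w hw
    simp [hu w hw]

/-- A subspace is Lagrangian when it coincides with its symplectic orthogonal. -/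
def IsLagrangian {E : Type*} [AddCommGroup E] [Module ℝ E]
    (σ : LinearMap.BilinForm ℝ E) (L : Submodule ℝ E) : Prop :=
  L = sympOrth σ L

/-- The negative Maslov index `i(L0, L1, L2)` of a triple of Lagrangian subspaces:
the negative inertia index of the Maslov form `m(l1) = σ(l0, l2)` (with `l1 = l0 + l2`,
`l0 ∈ L0`, `l2 ∈ L2`) defined on `L1 ∩ (L0 + L2)`, i.e. the supremum of dimensions of
subspaces on which the Maslov form is negative definite. -/
noncomputable def maslovIndex {E : Type*} [AddCommGroup E] [Module ℝ E]
    (σ : LinearMap.BilinForm ℝ E) (L0 L1 L2 : Submodule ℝ E) : ℕ :=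
  sSup {d : ℕ | ∃ W : Submodule ℝ E, W ≤ L1 ⊓ (L0 ⊔ L2) ∧
    (∀ v ∈ W, v ≠ 0 → ∀ l0 ∈ L0, ∀ l2 ∈ L2, v = l0 + l2 → σ l0 l2 < 0) ∧
    Module.finrank ℝ ↥W = d}

/-- The symplectic form `(−σ) ⊕ (−σ) ⊕ σ ⊕ σ` on `E × E × E × E`. -/
noncomputable def sympQuad {E : Type*} [AddCommGroup E] [Module ℝ E]
    (σ : LinearMap.BilinForm ℝ E) : LinearMap.BilinForm ℝ (E × E × E × E) :=
  LinearMap.mk₂ ℝ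
    (fun x y => -(σ x.1 y.1) - σ x.2.1 y.2.1 + σ x.2.2.1 y.2.2.1 + σ x.2.2.2 y.2.2.2)
    (by intro x x' y; simp [map_add]; ring)
    (by intro c x y; simp; ring)
    (by intro x y y'; simp [map_add]; ring)
    (by intro c x y; simp; ring)

/-!
For `x ∈ L1 ∩ (L0 + L2)` the decomposition `x = l0 + l2` gives the Maslov form the value
`σ x₃ x₂`. Membership also says that `x₂ ∈ Θ2⁻¹(Π)`, `x₃ ∈ Θ1(Π)` and `x₂ - x₃ ∈ Π`, so
`x₂ - x₃` lies in the domain `Π ∩ (Θ2⁻¹(Π) + Θ1(Π))` of the second Maslov form, whose value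
there is `σ x₂ (-x₃) = σ x₃ x₂`. Hence `x ↦ x₂ - x₃` maps the first domain onto the second and
pulls the second form back to the first, and such a map does not change the negative inertia
index: it is injective on negative definite subspaces, and these lift along linear sections.
-/

section Ring

variable {R M N : Type*} [Ring R] [AddCommGroup M] [Module R M] [AddCommGroup N] [Module R N]

theorem finrank_map_of_injOn {f : M →ₗ[R] N} {W : Submodule R M} (hf : Set.InjOn f W) :
    Module.finrank R (W.map f) = Module.finrank R W :=
  (LinearEquiv.ofBijective (f.submoduleMap W)
    ⟨LinearMap.submoduleMap_injective_of_injOn hf, f.submoduleMap_surjective W⟩).finrank_eq.symm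

theorem finrank_inf_comap_of_injective {f : M →ₗ[R] N} (hf : Function.Injective f)
    (A : Submodule R M) (C : Submodule R N) :
    Module.finrank R ↥(A ⊓ C.comap f) = Module.finrank R ↥(A.map f ⊓ C) := by
  rw [Submodule.map_inf_eq_map_inf_comap, finrank_map_of_injOn hf.injOn]

end Ring

section DivisionRing

variable {K M N : Type*} [DivisionRing K] [AddCommGroup M] [Module K M]
  [AddCommGroup N] [Module K N]

theorem finrank_submodule_prod_s14 [FiniteDimensional K M] [FiniteDimensional K N]
    (A : Submodule K M) (C : Submodule K N) :
    Module.finrank K (A.prod C) = Module.finrank K A + Module.finrank K C := by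
  have range_eq : LinearMap.range (A.subtype.prodMap C.subtype) = A.prod C := by
    rw [LinearMap.range_prodMap, A.range_subtype, C.range_subtype]
  rw [← Module.finrank_prod, ← range_eq]
  exact LinearMap.finrank_range_of_inj (A.injective_subtype.prodMap C.injective_subtype)

theorem exists_le_map_eq_injOn {f : M →ₗ[K] N} {U : Submodule K M} {W : Submodule K N}
    (hW : W ≤ U.map f) : ∃ V ≤ U, V.map f = W ∧ Set.InjOn f V := by
  set U' := U ⊓ W.comap f
  have map_U' : U'.map f = W := by
    rw [← Submodule.map_inf_eq_map_inf_comap, inf_eq_right.mpr hW]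
  obtain ⟨V, disjoint_V, sup_V⟩ :=
    IsModularLattice.exists_disjoint_and_sup_eq (inf_le_left : U' ⊓ LinearMap.ker f ≤ U')
  have V_le : V ≤ U' := sup_V ▸ le_sup_right
  refine ⟨V, V_le.trans inf_le_left, ?_, LinearMap.disjoint_ker_iff_injOn.mp ?_⟩
  · have map_ker : (U' ⊓ LinearMap.ker f).map f = ⊥ :=
      LinearMap.le_ker_iff_map.mp inf_le_right
    rw [← map_U', ← sup_V, Submodule.map_sup, map_ker, bot_sup_eq]
  · rw [disjoint_iff, eq_bot_iff, ← disjoint_V.eq_bot]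
    exact fun v hv => ⟨⟨V_le hv.1, hv.2⟩, hv.1⟩

end DivisionRing

section GraphPair

variable {R M₁ M₂ N₁ N₂ : Type*} [Ring R] [AddCommGroup M₁] [Module R M₁]
  [AddCommGroup M₂] [Module R M₂] [AddCommGroup N₁] [Module R N₁] [AddCommGroup N₂] [Module R N₂]

/-- The parametrization `(ξ₁, ξ₂) ↦ (ξ₁, ξ₂, f ξ₁, g ξ₂)` of `graphPair f g`. -/
def graphPairMap (f : M₁ →ₗ[R] N₁) (g : M₂ →ₗ[R] N₂) : M₁ × M₂ →ₗ[R] M₁ × M₂ × N₁ × N₂ :=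
  (LinearMap.fst R M₁ M₂).prod ((LinearMap.snd R M₁ M₂).prod
    ((f.comp (LinearMap.fst R M₁ M₂)).prod (g.comp (LinearMap.snd R M₁ M₂))))

theorem graphPairMap_apply (f : M₁ →ₗ[R] N₁) (g : M₂ →ₗ[R] N₂) (ξ : M₁ × M₂) :
    graphPairMap f g ξ = (ξ.1, ξ.2, f ξ.1, g ξ.2) :=
  rfl

theorem graphPairMap_injective (f : M₁ →ₗ[R] N₁) (g : M₂ →ₗ[R] N₂) :
    Function.Injective (graphPairMap f g) :=
  fun _ _ h => Prod.ext (congrArg (fun x => x.1) h) (congrArg (fun x => x.2.1) h)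

/-- The graph of `f × g`, with both arguments listed before both values; this is the subspace
`L1` of the theorem. -/
def graphPair (f : M₁ →ₗ[R] N₁) (g : M₂ →ₗ[R] N₂) : Submodule R (M₁ × M₂ × N₁ × N₂) :=
  LinearMap.range (graphPairMap f g)

/-- The product `A × Δ × D`, where `Δ` is the diagonal of the two middle factors; this is the
subspace `L2` of the theorem, where `α + X` runs through the whole space `Π ⊕ B`. -/
def prodDiagProd (A : Submodule R M₁) (D : Submodule R N₂) :
    Submodule R (M₁ × M₂ × M₂ × N₂) where
  carrier := {x | x.1 ∈ A ∧ x.2.1 = x.2.2.1 ∧ x.2.2.2 ∈ D}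
  add_mem' hx hy :=
    ⟨A.add_mem hx.1 hy.1, congrArg₂ (· + ·) hx.2.1 hy.2.1, D.add_mem hx.2.2 hy.2.2⟩
  zero_mem' := ⟨A.zero_mem, rfl, D.zero_mem⟩
  smul_mem' c _ hx := ⟨A.smul_mem c hx.1, congrArg (c • ·) hx.2.1, D.smul_mem c hx.2.2⟩

theorem mem_prodDiagProd {A : Submodule R M₁} {D : Submodule R N₂} {x : M₁ × M₂ × M₂ × N₂} :
    x ∈ prodDiagProd A D ↔ x.1 ∈ A ∧ x.2.1 = x.2.2.1 ∧ x.2.2.2 ∈ D :=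
  Iff.rfl

theorem finrank_graphPair_inf (f : M₁ →ₗ[R] N₁) (g : M₂ →ₗ[R] N₂)
    (S : Submodule R (M₁ × M₂ × N₁ × N₂)) :
    Module.finrank R ↥(graphPair f g ⊓ S) = Module.finrank R (S.comap (graphPairMap f g)) := by
  rw [graphPair, ← Submodule.map_comap_eq, finrank_map_of_injOn (graphPairMap_injective f g).injOn]

theorem finrank_graphPair_inf_prod_inf_prodDiagProd {f : M₁ →ₗ[R] M₂}
    (hf : Function.Injective f) (g : M₂ →ₗ[R] N₂) (A : Submodule R M₁) (P : Submodule R M₂)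
    (D : Submodule R N₂) :
    Module.finrank R ↥(graphPair f g ⊓ A.prod (P.prod (P.prod D)) ⊓ prodDiagProd A D)
      = Module.finrank R ↥(D.comap g ⊓ P ⊓ A.map f) := by
  have comap_eq : (A.prod (P.prod (P.prod D)) ⊓ prodDiagProd A D).comap (graphPairMap f g)
      = (A ⊓ (D.comap g ⊓ P).comap f).map (LinearMap.id.prod f) := by
    ext ⟨ξ₁, ξ₂⟩
    simp only [Submodule.mem_comap, graphPairMap_apply, Submodule.mem_prod, Submodule.mem_inf,
      mem_prodDiagProd, Submodule.mem_map, LinearMap.prod_apply]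
    constructor
    · rintro ⟨⟨hA, hP, -, hD⟩, -, rfl, -⟩
      exact ⟨ξ₁, ⟨hA, hD, hP⟩, rfl⟩
    · rintro ⟨ξ, ⟨hA, hD, hP⟩, ⟨⟩⟩
      exact ⟨⟨hA, hP, hP, hD⟩, hA, rfl, hD⟩
  have prod_injective : Function.Injective (LinearMap.id.prod f) :=
    fun _ _ h => congrArg Prod.fst h
  rw [inf_assoc, finrank_graphPair_inf, comap_eq, finrank_map_of_injOn prod_injective.injOn,
    finrank_inf_comap_of_injective hf, inf_comm]

/-- The map `x ↦ x₂ - x₃`, which reduces the Maslov form on `Σ⁴` to one on `Σ`. -/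
def middleDiff : M₁ × M₂ × M₂ × N₂ →ₗ[R] M₂ :=
  (LinearMap.fst R M₂ M₂ - LinearMap.snd R M₂ M₂).comp
    ((LinearMap.id.prodMap (LinearMap.fst R M₂ N₂)).comp (LinearMap.snd R M₁ (M₂ × M₂ × N₂)))

theorem middleDiff_apply (x : M₁ × M₂ × M₂ × N₂) : middleDiff (R := R) x = x.2.1 - x.2.2.1 :=
  rfl

theorem mem_prod_sup_prodDiagProd {A : Submodule R M₁} {P : Submodule R M₂} {D : Submodule R N₂}
    {x : M₁ × M₂ × M₂ × N₂} :
    x ∈ A.prod (P.prod (P.prod D)) ⊔ prodDiagProd A D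
      ↔ x.1 ∈ A ∧ x.2.1 - x.2.2.1 ∈ P ∧ x.2.2.2 ∈ D := by
  constructor
  · intro hx
    obtain ⟨y, ⟨hy1, hy2, hy3, hy4⟩, z, ⟨hz1, hz23, hz4⟩, rfl⟩ := Submodule.mem_sup.mp hx
    refine ⟨A.add_mem hy1 hz1, ?_, D.add_mem hy4 hz4⟩
    simpa [hz23] using P.sub_mem hy2 hy3
  · obtain ⟨x1, x2, x3, x4⟩ := x
    rintro ⟨h1, h23, h4⟩
    refine Submodule.mem_sup.mpr ⟨(0, x2 - x3, 0, 0), ?_, (x1, x3, x3, x4), ⟨h1, rfl, h4⟩, by simp⟩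
    exact ⟨A.zero_mem, h23, P.zero_mem, D.zero_mem⟩

theorem map_middleDiff_graphPair_inf (f : M₁ →ₗ[R] M₂) (g : M₂ →ₗ[R] N₂) (A : Submodule R M₁)
    (P : Submodule R M₂) (D : Submodule R N₂) :
    (graphPair f g ⊓ (A.prod (P.prod (P.prod D)) ⊔ prodDiagProd A D)).map middleDiff
      = P ⊓ (D.comap g ⊔ A.map f) := by
  ext p
  constructor
  · rintro ⟨_, ⟨⟨ξ, rfl⟩, hx⟩, rfl⟩
    obtain ⟨hA, hP, hD⟩ := mem_prod_sup_prodDiagProd.mp hx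
    refine ⟨hP, Submodule.mem_sup.mpr ⟨ξ.2, hD, -f ξ.1, ?_, (sub_eq_add_neg _ _).symm⟩⟩
    exact Submodule.neg_mem _ (Submodule.mem_map_of_mem hA)
  · rintro ⟨hP, hp⟩
    obtain ⟨q, hq, _, ⟨a, ha, rfl⟩, rfl⟩ := Submodule.mem_sup.mp hp
    have diff_eq : middleDiff (R := R) (graphPairMap f g (-a, q)) = q + f a := by
      simp [middleDiff_apply, graphPairMap_apply]
    refine ⟨graphPairMap f g (-a, q), ⟨⟨_, rfl⟩, mem_prod_sup_prodDiagProd.mpr ?_⟩, diff_eq⟩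
    exact ⟨A.neg_mem ha, by rwa [← middleDiff_apply (R := R), diff_eq], hq⟩

end GraphPair

theorem finrank_graphPair_inf_prod {K M₁ M₂ N₁ N₂ : Type*} [DivisionRing K]
    [AddCommGroup M₁] [Module K M₁] [FiniteDimensional K M₁] [AddCommGroup M₂] [Module K M₂]
    [FiniteDimensional K M₂] [AddCommGroup N₁] [Module K N₁] [AddCommGroup N₂] [Module K N₂]
    {f : M₁ →ₗ[K] N₁} (hf : Function.Injective f) (g : M₂ →ₗ[K] N₂) (A : Submodule K M₁)
    (P : Submodule K M₂) (Q : Submodule K N₁) (D : Submodule K N₂) :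
    Module.finrank K ↥(graphPair f g ⊓ A.prod (P.prod (Q.prod D)))
      = Module.finrank K ↥(A.map f ⊓ Q) + Module.finrank K ↥(D.comap g ⊓ P) := by
  have comap_eq : (A.prod (P.prod (Q.prod D))).comap (graphPairMap f g)
      = (A ⊓ Q.comap f).prod (D.comap g ⊓ P) := by
    ext ξ
    simp only [Submodule.mem_comap, graphPairMap_apply, Submodule.mem_prod, Submodule.mem_inf]
    tauto
  rw [finrank_graphPair_inf, comap_eq, finrank_submodule_prod_s14, finrank_inf_comap_of_injective hf]

section Isotropic

variable {E F : Type*} [AddCommGroup E] [Module ℝ E] [AddCommGroup F] [Module ℝ F]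
  {σ : LinearMap.BilinForm ℝ E} {τ : LinearMap.BilinForm ℝ F}

/-- A subspace is isotropic when the form vanishes on it. This half of `IsLagrangian` is all that
the Maslov form needs in order to be well defined. -/
def IsIsotropic (σ : LinearMap.BilinForm ℝ E) (L : Submodule ℝ E) : Prop :=
  ∀ u ∈ L, ∀ w ∈ L, σ u w = 0

theorem mem_sympOrth {W : Submodule ℝ E} {u : E} : u ∈ sympOrth σ W ↔ ∀ w ∈ W, σ u w = 0 :=
  Iff.rfl

theorem IsLagrangian.isIsotropic {L : Submodule ℝ E} (hL : IsLagrangian σ L) : IsIsotropic σ L :=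
  fun _ hu => mem_sympOrth.mp (hL.le hu)

theorem IsLagrangian.mem_of_forall {L : Submodule ℝ E} (hL : IsLagrangian σ L) {u : E}
    (hu : ∀ w ∈ L, σ u w = 0) : u ∈ L :=
  hL.ge (mem_sympOrth.mpr hu)

theorem IsIsotropic.isLagrangian {L : Submodule ℝ E} (hL : IsIsotropic σ L)
    (hmax : ∀ u, (∀ w ∈ L, σ u w = 0) → u ∈ L) : IsLagrangian σ L :=
  le_antisymm (fun u hu => mem_sympOrth.mpr (hL u hu)) fun u hu => hmax u (mem_sympOrth.mp hu)

theorem IsIsotropic.comap {L : Submodule ℝ F} (hL : IsIsotropic τ L) {f : E →ₗ[ℝ] F}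
    (hf : ∀ u w, τ (f u) (f w) = σ u w) : IsIsotropic σ (L.comap f) :=
  fun u hu w hw => (hf u w).symm.trans (hL _ hu _ hw)

theorem IsIsotropic.map {L : Submodule ℝ E} (hL : IsIsotropic σ L) {f : E →ₗ[ℝ] F}
    (hf : ∀ u w, τ (f u) (f w) = σ u w) : IsIsotropic τ (L.map f) := by
  rintro _ ⟨u, hu, rfl⟩ _ ⟨w, hw, rfl⟩
  rw [hf, hL u hu w hw]

theorem IsIsotropic.apply_eq_of_add_eq_add {L0 L2 : Submodule ℝ E} (h0 : IsIsotropic σ L0)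
    (h2 : IsIsotropic σ L2) {l0 l0' l2 l2' : E} (hl0 : l0 ∈ L0) (hl0' : l0' ∈ L0)
    (hl2 : l2 ∈ L2) (hl2' : l2' ∈ L2) (hadd : l0 + l2 = l0' + l2') : σ l0 l2 = σ l0' l2' := by
  have sub_eq : l0 - l0' = l2' - l2 := by
    rw [sub_eq_sub_iff_add_eq_add, hadd, add_comm]
  have left_change : σ (l0 - l0') l2 = 0 :=
    h2 _ (sub_eq ▸ L2.sub_mem hl2' hl2) _ hl2
  have right_change : σ l0' (l2' - l2) = 0 :=
    h0 _ hl0' _ (sub_eq ▸ L0.sub_mem hl0 hl0')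
  rw [map_sub, LinearMap.sub_apply, sub_eq_zero] at left_change
  rw [map_sub, sub_eq_zero] at right_change
  exact left_change.trans right_change.symm

theorem eq_of_forall_apply_eq (hσ : σ.SeparatingLeft) {u v : E} (h : ∀ w, σ u w = σ v w) :
    u = v :=
  LinearMap.ker_eq_bot.mp (LinearMap.separatingLeft_iff_ker_eq_bot.mp hσ) (LinearMap.ext h)

end Isotropic

section SympQuad

variable {E : Type*} [AddCommGroup E] [Module ℝ E] {σ : LinearMap.BilinForm ℝ E}
  {A P Q D : Submodule ℝ E} {f g : E →ₗ[ℝ] E}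

theorem sympQuad_apply (x y : E × E × E × E) :
    sympQuad σ x y
      = -(σ x.1 y.1) - σ x.2.1 y.2.1 + σ x.2.2.1 y.2.2.1 + σ x.2.2.2 y.2.2.2 :=
  rfl

theorem IsLagrangian.prod_sympQuad (hA : IsLagrangian σ A) (hP : IsLagrangian σ P)
    (hQ : IsLagrangian σ Q) (hD : IsLagrangian σ D) :
    IsLagrangian (sympQuad σ) (A.prod (P.prod (Q.prod D))) := by
  refine IsIsotropic.isLagrangian ?_ fun x hx => ?_
  · rintro x ⟨hx1, hx2, hx3, hx4⟩ y ⟨hy1, hy2, hy3, hy4⟩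
    simp [sympQuad_apply, hA.isIsotropic _ hx1 _ hy1, hP.isIsotropic _ hx2 _ hy2,
      hQ.isIsotropic _ hx3 _ hy3, hD.isIsotropic _ hx4 _ hy4]
  · refine ⟨hA.mem_of_forall fun w hw => ?_, hP.mem_of_forall fun w hw => ?_,
      hQ.mem_of_forall fun w hw => ?_, hD.mem_of_forall fun w hw => ?_⟩
    · simpa [sympQuad_apply] using hx (w, 0, 0, 0) (by simp [hw])
    · simpa [sympQuad_apply] using hx (0, w, 0, 0) (by simp [hw])
    · simpa [sympQuad_apply] using hx (0, 0, w, 0) (by simp [hw])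
    · simpa [sympQuad_apply] using hx (0, 0, 0, w) (by simp [hw])

theorem isLagrangian_graphPair (hσ : σ.SeparatingLeft) (hf_surj : Function.Surjective f)
    (hg_surj : Function.Surjective g) (hf : ∀ u w, σ (f u) (f w) = σ u w)
    (hg : ∀ u w, σ (g u) (g w) = σ u w) : IsLagrangian (sympQuad σ) (graphPair f g) := by
  refine IsIsotropic.isLagrangian ?_ ?_
  · rintro _ ⟨ξ, rfl⟩ _ ⟨η, rfl⟩
    simp only [graphPairMap_apply, sympQuad_apply, hf, hg]
    ring
  · rintro ⟨a, b, c, d⟩ hx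
    obtain ⟨a', rfl⟩ := hf_surj c
    obtain ⟨b', rfl⟩ := hg_surj d
    have orth (w₁ w₂ : E) : -σ a w₁ - σ b w₂ + σ a' w₁ + σ b' w₂ = 0 := by
      simpa only [graphPairMap_apply, sympQuad_apply, hf, hg] using hx _ ⟨(w₁, w₂), rfl⟩
    obtain rfl : a = a' := eq_of_forall_apply_eq hσ fun w => by
      simpa [neg_add_eq_zero] using orth w 0
    obtain rfl : b = b' := eq_of_forall_apply_eq hσ fun w => by
      simpa [neg_add_eq_zero] using orth 0 w
    exact ⟨(a, b), rfl⟩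

theorem IsLagrangian.prodDiagProd_sympQuad (hσ : σ.SeparatingLeft) (hA : IsLagrangian σ A)
    (hD : IsLagrangian σ D) : IsLagrangian (sympQuad σ) (prodDiagProd A D) := by
  refine IsIsotropic.isLagrangian ?_ fun x hx => ?_
  · rintro x ⟨hx1, hx23, hx4⟩ y ⟨hy1, hy23, hy4⟩
    simp [sympQuad_apply, hx23, hy23, hA.isIsotropic _ hx1 _ hy1, hD.isIsotropic _ hx4 _ hy4]
  · refine ⟨hA.mem_of_forall fun w hw => ?_, eq_of_forall_apply_eq hσ fun w => ?_,
      hD.mem_of_forall fun w hw => ?_⟩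
    · simpa [sympQuad_apply] using hx (w, 0, 0, 0) (by simp [mem_prodDiagProd, hw])
    · have orth := hx (0, w, w, 0) (by simp [mem_prodDiagProd])
      simp only [sympQuad_apply, map_zero] at orth
      linear_combination -orth
    · simpa [sympQuad_apply] using hx (0, 0, 0, w) (by simp [mem_prodDiagProd, hw])

end SympQuad

section MaslovTransfer

variable {E F : Type*} [AddCommGroup E] [Module ℝ E] [AddCommGroup F] [Module ℝ F]
  {σ : LinearMap.BilinForm ℝ E} {τ : LinearMap.BilinForm ℝ F} {L0 L1 L2 : Submodule ℝ E}
  {M0 M1 M2 : Submodule ℝ F} {f : E →ₗ[ℝ] F}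

/-- `W` is a subspace of the domain of the Maslov form `m(L0, L1, L2)` on which that form is
negative definite. -/
def IsMaslovNegative (σ : LinearMap.BilinForm ℝ E) (L0 L1 L2 W : Submodule ℝ E) : Prop :=
  W ≤ L1 ⊓ (L0 ⊔ L2) ∧
    ∀ v ∈ W, v ≠ 0 → ∀ l0 ∈ L0, ∀ l2 ∈ L2, v = l0 + l2 → σ l0 l2 < 0

/-- `f` pulls the Maslov form of a triple `(M0, _, M2)` back to that of `(L0, L1, L2)`. The forms
are compared through all decompositions of a vector and of its image, so that neither form has to
be constructed as a function. -/
def PullsBackMaslovForm (σ : LinearMap.BilinForm ℝ E) (L0 L1 L2 : Submodule ℝ E)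
    (τ : LinearMap.BilinForm ℝ F) (M0 M2 : Submodule ℝ F) (f : E →ₗ[ℝ] F) : Prop :=
  ∀ l0 ∈ L0, ∀ l2 ∈ L2, l0 + l2 ∈ L1 →
    ∀ m0 ∈ M0, ∀ m2 ∈ M2, f (l0 + l2) = m0 + m2 → σ l0 l2 = τ m0 m2

theorem maslovIndex_eq_sSup : maslovIndex σ L0 L1 L2 =
    sSup {d : ℕ | ∃ W, IsMaslovNegative σ L0 L1 L2 W ∧ Module.finrank ℝ W = d} := by
  simp only [maslovIndex, IsMaslovNegative, and_assoc]

theorem PullsBackMaslovForm.injOn (hf : PullsBackMaslovForm σ L0 L1 L2 τ M0 M2 f)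
    {W : Submodule ℝ E} (hW : IsMaslovNegative σ L0 L1 L2 W) : Set.InjOn f W := by
  rw [← LinearMap.disjoint_ker_iff_injOn, LinearMap.disjoint_ker]
  intro v hv hfv
  by_contra hv0
  obtain ⟨hv1, hv02⟩ := hW.1 hv
  obtain ⟨l0, hl0, l2, hl2, rfl⟩ := Submodule.mem_sup.mp hv02
  have form_eq_zero : σ l0 l2 = 0 := by
    simpa using hf l0 hl0 l2 hl2 hv1 0 M0.zero_mem 0 M2.zero_mem (by rw [hfv, add_zero])
  exact (hW.2 _ hv hv0 l0 hl0 l2 hl2 rfl).ne form_eq_zero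

theorem PullsBackMaslovForm.isMaslovNegative_map
    (hf : PullsBackMaslovForm σ L0 L1 L2 τ M0 M2 f)
    (hdom : (L1 ⊓ (L0 ⊔ L2)).map f ≤ M1 ⊓ (M0 ⊔ M2)) {W : Submodule ℝ E}
    (hW : IsMaslovNegative σ L0 L1 L2 W) : IsMaslovNegative τ M0 M1 M2 (W.map f) := by
  refine ⟨(Submodule.map_mono hW.1).trans hdom, ?_⟩
  rintro _ ⟨v, hv, rfl⟩ hfv m0 hm0 m2 hm2 heq
  have hv0 : v ≠ 0 := fun h => hfv (by rw [h, map_zero])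
  obtain ⟨hv1, hv02⟩ := hW.1 hv
  obtain ⟨l0, hl0, l2, hl2, rfl⟩ := Submodule.mem_sup.mp hv02
  rw [← hf l0 hl0 l2 hl2 hv1 m0 hm0 m2 hm2 heq]
  exact hW.2 _ hv hv0 l0 hl0 l2 hl2 rfl

theorem PullsBackMaslovForm.isMaslovNegative_of_map
    (hf : PullsBackMaslovForm σ L0 L1 L2 τ M0 M2 f) {V : Submodule ℝ E}
    (hV : V ≤ L1 ⊓ (L0 ⊔ L2)) (hinj : Set.InjOn f V)
    (hmap : IsMaslovNegative τ M0 M1 M2 (V.map f)) : IsMaslovNegative σ L0 L1 L2 V := by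
  refine ⟨hV, ?_⟩
  rintro _ hv hv0 l0 hl0 l2 hl2 rfl
  have hfv : f (l0 + l2) ∈ V.map f := Submodule.mem_map_of_mem hv
  have hfv0 : f (l0 + l2) ≠ 0 := fun h => hv0 (hinj hv V.zero_mem (h.trans (map_zero f).symm))
  obtain ⟨m0, hm0, m2, hm2, heq⟩ := Submodule.mem_sup.mp (hmap.1 hfv).2
  rw [hf l0 hl0 l2 hl2 (hV hv).1 m0 hm0 m2 hm2 heq.symm]
  exact hmap.2 _ hfv hfv0 m0 hm0 m2 hm2 heq.symm

theorem PullsBackMaslovForm.maslovIndex_eq (hf : PullsBackMaslovForm σ L0 L1 L2 τ M0 M2 f)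
    (hdom : (L1 ⊓ (L0 ⊔ L2)).map f = M1 ⊓ (M0 ⊔ M2)) :
    maslovIndex σ L0 L1 L2 = maslovIndex τ M0 M1 M2 := by
  rw [maslovIndex_eq_sSup, maslovIndex_eq_sSup]
  congr 1 with d
  constructor
  · rintro ⟨W, hW, rfl⟩
    exact ⟨W.map f, hf.isMaslovNegative_map hdom.le hW, finrank_map_of_injOn (hf.injOn hW)⟩
  · rintro ⟨W, hW, rfl⟩
    obtain ⟨V, hV, rfl, hinj⟩ := exists_le_map_eq_injOn (hW.1.trans hdom.ge)
    exact ⟨V, hf.isMaslovNegative_of_map hV hinj hW, (finrank_map_of_injOn hinj).symm⟩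

end MaslovTransfer

section MaslovSplitting

variable {E : Type*} [AddCommGroup E] [Module ℝ E] {σ : LinearMap.BilinForm ℝ E}
  {A P D : Submodule ℝ E} {f g : E →ₗ[ℝ] E}

theorem sympQuad_apply_of_mem (hσ : σ.IsAlt) (hA : IsIsotropic σ A) (hP : IsIsotropic σ P)
    (hD : IsIsotropic σ D) {x y : E × E × E × E} (hx : x ∈ A.prod (P.prod (P.prod D)))
    (hy : y ∈ prodDiagProd A D) : sympQuad σ x y = σ (x + y).2.2.1 (x + y).2.1 := by
  obtain ⟨hx1, hx2, hx3, hx4⟩ := hx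
  obtain ⟨hy1, hy23, hy4⟩ := hy
  simp only [sympQuad_apply, Prod.fst_add, Prod.snd_add, map_add, LinearMap.add_apply, hy23,
    hA _ hx1 _ hy1, hP _ hx3 _ hx2, hD _ hx4 _ hy4, hσ.self_eq_zero]
  rw [← hσ.neg_eq x.2.1]
  ring

theorem pullsBackMaslovForm_middleDiff (hσ : σ.IsAlt) (hA : IsIsotropic σ A)
    (hP : IsIsotropic σ P) (hD : IsIsotropic σ D) (hf : ∀ u w, σ (f u) (f w) = σ u w)
    (hg : ∀ u w, σ (g u) (g w) = σ u w) :
    PullsBackMaslovForm (sympQuad σ) (A.prod (P.prod (P.prod D))) (graphPair f g)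
      (prodDiagProd A D) σ (D.comap g) (A.map f) middleDiff := by
  intro x hx y hy hxy m0 hm0 m2 hm2 heq
  obtain ⟨hxyA, -, hxyD⟩ := mem_prod_sup_prodDiagProd.mp (Submodule.add_mem_sup hx hy)
  rw [sympQuad_apply_of_mem hσ hA hP hD hx hy]
  obtain ⟨ξ, hξ⟩ := hxy
  rw [← hξ] at hxyA hxyD heq ⊢
  have neg_mem : -f ξ.1 ∈ A.map f := Submodule.neg_mem _ (Submodule.mem_map_of_mem hxyA)
  calc σ (f ξ.1) ξ.2
      = σ ξ.2 (-f ξ.1) := by rw [map_neg, hσ.neg_eq]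
    _ = σ m0 m2 := (hD.comap hg).apply_eq_of_add_eq_add (hA.map hf) hxyD hm0 neg_mem hm2
        ((sub_eq_add_neg _ _).symm.trans heq)

theorem maslovIndex_sympQuad_graphPair (hσ : σ.IsAlt) (hA : IsIsotropic σ A)
    (hP : IsIsotropic σ P) (hD : IsIsotropic σ D) (hf : ∀ u w, σ (f u) (f w) = σ u w)
    (hg : ∀ u w, σ (g u) (g w) = σ u w) :
    maslovIndex (sympQuad σ) (A.prod (P.prod (P.prod D))) (graphPair f g) (prodDiagProd A D)
      = maslovIndex σ (D.comap g) P (A.map f) :=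
  (pullsBackMaslovForm_middleDiff hσ hA hP hD hf hg).maslovIndex_eq
    (map_middleDiff_graphPair_inf f g A P D)

end MaslovSplitting

/-- the three subspaces `L0 = Π⁴`, `L1 = {(ξ1,ξ2,Θ1ξ1,Θ2ξ2)}`,
`L2 = {(ν1, α+X, α+X, ν2) : ν1,ν2,α ∈ Π, X ∈ B}` are Lagrangian in
`(E⁴, (−σ)⊕(−σ)⊕σ⊕σ)`, the Maslov index `i(L0,L1,L2)` equals
`i(Θ2⁻¹(Π), Π, Θ1(Π))` in `(E,σ)`, and the stated dimension identities hold. -/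
theorem maslov_index_splitting
    {E : Type*} [AddCommGroup E] [Module ℝ E] [FiniteDimensional ℝ E]
    (σ : LinearMap.BilinForm ℝ E) (n : ℕ) (hdim : Module.finrank ℝ E = 2 * n)
    (halt : ∀ v, σ v v = 0) (hnd : LinearMap.BilinForm.Nondegenerate σ)
    (P B : Submodule ℝ E) (hP : IsLagrangian σ P) (hB : IsLagrangian σ B)
    (hcompl : IsCompl P B)
    (Θ1 Θ2 : E ≃ₗ[ℝ] E)
    (hΘ1 : ∀ u w, σ (Θ1 u) (Θ1 w) = σ u w) (hΘ2 : ∀ u w, σ (Θ2 u) (Θ2 w) = σ u w)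
    (L1 : Submodule ℝ (E × E × E × E))
    (hL1 : L1 = LinearMap.range
      ((LinearMap.fst ℝ E E).prod (((LinearMap.snd ℝ E E)).prod
        ((Θ1.toLinearMap.comp (LinearMap.fst ℝ E E)).prod
          (Θ2.toLinearMap.comp (LinearMap.snd ℝ E E))))))
    (L2 : Submodule ℝ (E × E × E × E))
    (hL2 : ∀ x : E × E × E × E,
      x ∈ L2 ↔ (x.1 ∈ P ∧ x.2.1 = x.2.2.1 ∧ x.2.2.2 ∈ P)) :
    IsLagrangian (sympQuad σ) (P.prod (P.prod (P.prod P))) ∧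
    IsLagrangian (sympQuad σ) L1 ∧
    IsLagrangian (sympQuad σ) L2 ∧
    maslovIndex (sympQuad σ) (P.prod (P.prod (P.prod P))) L1 L2
      = maslovIndex σ (Submodule.comap Θ2.toLinearMap P) P
          (Submodule.map Θ1.toLinearMap P) ∧
    Module.finrank ℝ ↥(L1 ⊓ P.prod (P.prod (P.prod P)))
      = Module.finrank ℝ ↥(Submodule.map Θ1.toLinearMap P ⊓ P)
        + Module.finrank ℝ ↥(Submodule.comap Θ2.toLinearMap P ⊓ P) ∧
    Module.finrank ℝ ↥(L1 ⊓ P.prod (P.prod (P.prod P)) ⊓ L2)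
      = Module.finrank ℝ
          ↥(Submodule.comap Θ2.toLinearMap P ⊓ P ⊓ Submodule.map Θ1.toLinearMap P) := by
  obtain rfl : L1 = graphPair Θ1.toLinearMap Θ2.toLinearMap := hL1
  obtain rfl : L2 = prodDiagProd P P := Submodule.ext hL2
  have hP_iso : IsIsotropic σ P := hP.isIsotropic
  exact ⟨hP.prod_sympQuad hP hP hP,
    isLagrangian_graphPair hnd.1 Θ1.surjective Θ2.surjective hΘ1 hΘ2,
    hP.prodDiagProd_sympQuad hnd.1 hP,
    maslovIndex_sympQuad_graphPair halt hP_iso hP_iso hP_iso hΘ1 hΘ2,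
    finrank_graphPair_inf_prod Θ1.injective Θ2.toLinearMap P P P P,
    finrank_graphPair_inf_prod_inf_prodDiagProd Θ1.injective Θ2.toLinearMap P P P⟩
end
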